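/- arXiv:1708.01457 — 2 statements merged into one kernel-verified Lean document; each statement's English description precedes it below -/
import Mathlib

section
/- For every convex polygon with m + 3 vertices, there exists a straight-line planar embedding of the path graph P on m + 1 nodes (with m edges) such that each node of the path is mapped to a distinct vertex of the polygon and every edge of the path is a diagonal of the polygon (i.e., no path edge coincides with a polygon edge), and no two path edges cross except at shared endpoints. -/
open Set Function

/-- Points in the plane. -/
abbrev Pt : Type := ℝ × ℝ

/-- The closed straight-line segment between two points. -/
def seg (a b : Pt) : Set Pt := segment ℝ a b

/-- Two vertex indices of an `n`-gon are adjacent (consecutive in the cyclic order). -/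
def adjV {n : ℕ} [NeZero n] (i j : Fin n) : Prop := j = i + 1 ∨ i = j + 1

/-- The `i`-th boundary edge of the polygon with vertices `p`. -/
def edgeSeg {n : ℕ} [NeZero n] (p : Fin n → Pt) (i : Fin n) : Set Pt := seg (p i) (p (i + 1))

/-- Two segments are non-crossing: they meet at most in shared endpoints. -/
def NC (a b c d : Pt) : Prop := seg a b ∩ seg c d ⊆ ({a, b} ∩ {c, d} : Set Pt)

/-- A simple polygon: at least 3 distinct vertices, and boundary edges meet only at
shared endpoints. -/
def IsSimplePolygon {n : ℕ} [NeZero n] (p : Fin n → Pt) : Prop :=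
  3 ≤ n ∧ Function.Injective p ∧
    ∀ i j : Fin n, i ≠ j →
      edgeSeg p i ∩ edgeSeg p j ⊆ ({p i, p (i + 1)} ∩ {p j, p (j + 1)} : Set Pt)

/-- A convex polygon: a simple polygon whose vertices are in convex position. -/
def IsConvexPolygon {n : ℕ} [NeZero n] (p : Fin n → Pt) : Prop :=
  IsSimplePolygon p ∧ ConvexIndependent ℝ p

/-- `K` is the closed region bounded by the polygon `p`. -/
def IsRegionOf {n : ℕ} [NeZero n] (p : Fin n → Pt) (K : Set Pt) : Prop :=
  IsCompact K ∧ closure (interior K) = K ∧ frontier K = ⋃ i, edgeSeg p i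

/-- Vertex `a` and vertex `b` are visible from each other: the segment joining them does not
cross the polygon boundary (it meets each boundary edge only in shared endpoints). -/
def Visible {n : ℕ} [NeZero n] (p : Fin n → Pt) (a b : Fin n) : Prop :=
  ∀ i : Fin n, seg (p a) (p b) ∩ edgeSeg p i ⊆ ({p a, p b} ∩ {p i, p (i + 1)} : Set Pt)

/-- Cross product of `b - a` and `c - a`. -/
def cross2 (a b c : Pt) : ℝ := (b.1 - a.1) * (c.2 - a.2) - (b.2 - a.2) * (c.1 - a.1)

/-- The vertices are listed counterclockwise (positive signed area). -/
def IsCCW {n : ℕ} [NeZero n] (p : Fin n → Pt) : Prop :=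
  0 < ∑ i : Fin n, ((p i).1 * (p (i + 1)).2 - (p (i + 1)).1 * (p i).2)

/-- Vertex `i` of a counterclockwise polygon is reflex (interior angle greater than `π`). -/
def IsReflex {n : ℕ} [NeZero n] (p : Fin n → Pt) (i : Fin n) : Prop :=
  cross2 (p (i - 1)) (p i) (p (i + 1)) < 0

/-- A pseudo-convex polygon: a simple (counterclockwise) polygon with no two consecutive
reflex vertices. -/
def IsPseudoConvex {n : ℕ} [NeZero n] (p : Fin n → Pt) : Prop :=
  IsSimplePolygon p ∧ IsCCW p ∧ ∀ i : Fin n, ¬ (IsReflex p i ∧ IsReflex p (i + 1))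

/-- The set of vertices visible from `i`, together with `i` and its two boundary neighbours. -/
def visSet {n : ℕ} [NeZero n] (p : Fin n → Pt) (i : Fin n) : Set (Fin n) :=
  {j | Visible p i j ∨ j = i - 1 ∨ j = i ∨ j = i + 1}

/-- Vertex `i` is isolated: it sees fewer than five vertices (counting itself and its two
neighbours), or exactly five and the two visible non-neighbours are adjacent to each other. -/
def IsIsolated {n : ℕ} [NeZero n] (p : Fin n → Pt) (i : Fin n) : Prop :=
  (visSet p i).ncard < 5 ∨
  ((visSet p i).ncard = 5 ∧
    ∀ u ∈ visSet p i, ∀ w ∈ visSet p i,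
      u ∉ ({i - 1, i, i + 1} : Set (Fin n)) → w ∉ ({i - 1, i, i + 1} : Set (Fin n)) →
      u ≠ w → adjV u w)

/-- A straight-line planar polygon embedding of the cycle graph on `m` nodes into the polygon
`p` with bounded region `K`: nodes map injectively to polygon vertices, every cycle edge is a
diagonal of the polygon (endpoints non-adjacent, hence not a polygon edge) lying inside `K`,
distinct cycle edges meet at most in shared endpoints, and cycle edges meet boundary edges at
most in shared endpoints. -/
def IsCycleEmbedding {n m : ℕ} [NeZero n] [NeZero m] (p : Fin n → Pt) (K : Set Pt)
    (f : Fin m → Fin n) : Prop :=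
  Function.Injective f ∧
  (∀ k : Fin m, ¬ adjV (f k) (f (k + 1))) ∧
  (∀ k : Fin m, seg (p (f k)) (p (f (k + 1))) ⊆ K) ∧
  (∀ k l : Fin m, ({p (f k), p (f (k + 1))} : Set Pt) ≠ ({p (f l), p (f (l + 1))} : Set Pt) →
    NC (p (f k)) (p (f (k + 1))) (p (f l)) (p (f (l + 1)))) ∧
  (∀ k : Fin m, ∀ i : Fin n,
    seg (p (f k)) (p (f (k + 1))) ∩ edgeSeg p i ⊆
      ({p (f k), p (f (k + 1))} ∩ {p i, p (i + 1)} : Set Pt))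


lemma line_cases (A B X : Pt) (h : A ≠ B) (hx : cross2 A B X = 0) :
    X ∈ segment ℝ A B ∨ B ∈ segment ℝ A X ∨ A ∈ segment ℝ B X := by
  obtain ⟨s, hs⟩ : ∃ s : ℝ, X = A + s • (B - A) := by
    unfold cross2 at hx
    by_cases h1 : B.1 - A.1 = 0
    · have h2 : B.2 - A.2 ≠ 0 := by
        intro h2
        exact h (Prod.ext (by linarith) (by linarith))
      refine ⟨(X.2 - A.2) / (B.2 - A.2), Prod.ext ?_ ?_⟩
      · have : (B.2 - A.2) * (X.1 - A.1) = 0 := by rw [h1] at hx; linarith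
        have := (mul_eq_zero.1 this).resolve_left h2
        simp [h1]; linarith
      · simp; field_simp; ring
    · refine ⟨(X.1 - A.1) / (B.1 - A.1), Prod.ext ?_ ?_⟩
      · simp; field_simp; ring
      · simp; field_simp; linarith
  rcases lt_or_ge s 0 with h0 | h0
  · right; right
    refine ⟨-s / (1 - s), 1 / (1 - s), div_nonneg (by linarith) (by linarith),
      div_nonneg (by linarith) (by linarith), ?_, ?_⟩
    · have : 1 - s ≠ 0 := by linarith
      field_simp; ring
    · have : 1 - s ≠ 0 := by linarith
      subst hs
      ext <;> simp <;> field_simp <;> ring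
  · rcases le_or_gt s 1 with h1 | h1
    · left
      refine ⟨1 - s, s, by linarith, h0, by ring, ?_⟩
      subst hs
      ext <;> simp <;> ring
    · right; left
      have : s ≠ 0 := by linarith
      refine ⟨1 - 1 / s, 1 / s, ?_, by positivity, by ring, ?_⟩
      · rw [sub_nonneg, div_le_one (by linarith)]; exact h1.le
      · subst hs
        ext <;> simp <;> field_simp <;> ring

lemma ci3 {n : ℕ} {q : Fin n → Pt} (hq : ConvexIndependent ℝ q) {a b c d : Fin n}
    (hab : a ≠ b) (hac : a ≠ c) (had : a ≠ d) {X : Pt} (hX : X ∈ segment ℝ (q c) (q d))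
    (h : q a ∈ segment ℝ (q b) X) : False := by
  have := hq {b, c, d} a (by
    have hm : ∀ e ∈ ({b, c, d} : Set (Fin n)), q e ∈ convexHull ℝ (q '' {b, c, d}) :=
      fun e he => subset_convexHull ℝ _ ⟨e, he, rfl⟩
    have hc := convex_convexHull ℝ (q '' {b, c, d})
    exact hc.segment_subset (hm b (by simp))
      (hc.segment_subset (hm c (by simp)) (hm d (by simp)) hX) h)
  simp [hab, hac, had] at this

lemma cross_ne {n : ℕ} {q : Fin n → Pt} (hq : ConvexIndependent ℝ q) {a b c : Fin n}
    (hab : a ≠ b) (hac : a ≠ c) (hbc : b ≠ c) : cross2 (q a) (q b) (q c) ≠ 0 := by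
  intro h
  rcases line_cases _ _ _ (hq.injective.ne hab) h with h | h | h
  · exact ci3 hq hac.symm hbc.symm hbc.symm (by simp) h
  · exact ci3 hq hab.symm hbc hbc (by simp) h
  · exact ci3 hq hab hac hac (by simp) h

lemma cross_lin (A B C D : Pt) (s t : ℝ) (h : s + t = 1) :
    cross2 A B (s • C + t • D) = s * cross2 A B C + t * cross2 A B D := by
  obtain rfl : s = 1 - t := by linarith
  simp [cross2]; ring

lemma edge_side {n : ℕ} {q : Fin n → Pt} (hq : ConvexIndependent ℝ q) {a b c d : Fin n}
    (hab : a ≠ b) (hac : a ≠ c) (hbc : b ≠ c) (had : a ≠ d) (hbd : b ≠ d)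
    (h : NC (q a) (q b) (q c) (q d)) :
    0 < cross2 (q a) (q b) (q c) * cross2 (q a) (q b) (q d) := by
  by_contra hn
  have h1 := cross_ne hq hab hac hbc
  have h2 := cross_ne hq hab had hbd
  have hlt := lt_of_le_of_ne (not_lt.1 hn) (mul_ne_zero h1 h2)
  obtain ⟨X, hX, hX0⟩ : ∃ X ∈ segment ℝ (q c) (q d), cross2 (q a) (q b) X = 0 := by
    generalize hu : cross2 (q a) (q b) (q c) = u at *
    generalize hv : cross2 (q a) (q b) (q d) = v at *
    have huv : v - u ≠ 0 := by
      intro h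
      rw [sub_eq_zero] at h
      rw [h] at hlt
      exact absurd hlt (not_lt.2 (mul_self_nonneg u))
    have hsum : v / (v - u) + -u / (v - u) = 1 := by field_simp; ring
    refine ⟨(v / (v - u)) • q c + (-u / (v - u)) • q d, ⟨_, _, ?_, ?_, hsum, rfl⟩, ?_⟩
    · rw [← mul_div_mul_right _ _ huv]
      exact div_nonneg (by nlinarith [mul_self_nonneg v]) (mul_self_nonneg _)
    · rw [← mul_div_mul_right _ _ huv]
      exact div_nonneg (by nlinarith [mul_self_nonneg u]) (mul_self_nonneg _)
    · rw [cross_lin _ _ _ _ _ _ hsum, hu, hv]; field_simp; ring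
  rcases line_cases _ _ _ (hq.injective.ne hab) hX0 with h' | h' | h'
  · have := h ⟨h', hX⟩
    have i := hq.injective
    simp only [mem_inter_iff, mem_insert_iff, mem_singleton_iff] at this
    rcases this with ⟨rfl | rfl, e | e⟩
    · exact hac (i e)
    · exact had (i e)
    · exact hbc (i e)
    · exact hbd (i e)
  · exact ci3 hq hab.symm hbc hbd hX h'
  · exact ci3 hq hab hac had hX h'

lemma cross_cyc (A B C : Pt) : cross2 A B C = cross2 B C A := by
  unfold cross2; ring

lemma plucker (P U A B C : Pt) : cross2 P U B * cross2 P A C =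
    cross2 P U A * cross2 P B C + cross2 P U C * cross2 P A B := by
  unfold cross2; ring

lemma NC.swap1 {a b c d : Pt} (h : NC a b c d) : NC b a c d := by
  unfold NC seg at *
  rwa [segment_symm, pair_comm b a]

lemma NC.swap {a b c d : Pt} (h : NC a b c d) : NC c d a b := by
  unfold NC at *
  rwa [inter_comm, inter_comm {c, d}]

lemma Fin_ofNat_ne {m i s t : ℕ} (hst : s < t) (ht : t < s + (m + 3)) :
    Fin.ofNat (m + 3) (i + s) ≠ Fin.ofNat (m + 3) (i + t) := by
  intro h
  have h := congrArg Fin.val h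
  simp only [Fin.val_ofNat] at h
  have : (i + s) ≡ (i + t) [MOD (m + 3)] := h
  have := Nat.ModEq.add_left_cancel' i this
  have := (Nat.modEq_iff_dvd' hst.le).1 this
  have := Nat.le_of_dvd (by omega) this
  omega

lemma exists_sign (m : ℕ) (q : Fin (m + 3) → Pt) (hQ : IsConvexPolygon q) :
    ∃ σ : ℝ, ∀ i j k : Fin (m + 3), i < j → j < k → 0 < σ * cross2 (q i) (q j) (q k) := by
  obtain ⟨⟨-, -, hs⟩, hq⟩ := hQ
  set Q : ℕ → Pt := fun t => q (Fin.ofNat (m + 3) t) with hQd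
  have per : ∀ t, Q (t + (m + 3)) = Q t := by
    intro t; simp only [hQd]; congr 1; ext; simp
  have succ : ∀ t, Fin.ofNat (m + 3) (t + 1) = Fin.ofNat (m + 3) t + 1 := by
    intro t; ext; simp [Fin.val_add]
  have step : ∀ i t, 2 ≤ t → t + 1 < m + 3 →
      0 < cross2 (Q i) (Q (i + 1)) (Q (i + t)) * cross2 (Q i) (Q (i + 1)) (Q (i + (t + 1))) := by
    intro i t h1 h2
    have key := hs (Fin.ofNat (m + 3) i) (Fin.ofNat (m + 3) (i + t))
      (Fin_ofNat_ne (m := m) (i := i) (s := 0) (t := t) (by omega) (by omega))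
    unfold edgeSeg at key
    rw [← succ, ← succ] at key
    exact edge_side hq
      (Fin_ofNat_ne (m := m) (i := i) (s := 0) (t := 1) (by omega) (by omega))
      (Fin_ofNat_ne (m := m) (i := i) (s := 0) (t := t) (by omega) (by omega))
      (Fin_ofNat_ne (m := m) (i := i) (s := 1) (t := t) (by omega) (by omega))
      (Fin_ofNat_ne (m := m) (i := i) (s := 0) (t := t + 1) (by omega) (by omega))
      (Fin_ofNat_ne (m := m) (i := i) (s := 1) (t := t + 1) (by omega) (by omega))
      key
  have mulpos : ∀ x y z : ℝ, 0 < x * y → 0 < y * z → 0 < x * z := by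
    intro x y z h1 h2
    by_contra h
    have : 0 < (x * y) * (y * z) := mul_pos h1 h2
    nlinarith [mul_self_nonneg y]
  have same : ∀ i t, 2 ≤ t → t < m + 3 →
      0 < cross2 (Q i) (Q (i + 1)) (Q (i + 2)) * cross2 (Q i) (Q (i + 1)) (Q (i + t)) := by
    intro i t h1
    induction t, h1 using Nat.le_induction with
    | base =>
      intro _
      exact mul_self_pos.2 (cross_ne hq
        (Fin_ofNat_ne (m := m) (i := i) (s := 0) (t := 1) (by omega) (by omega))
        (Fin_ofNat_ne (m := m) (i := i) (s := 0) (t := 2) (by omega) (by omega))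
        (Fin_ofNat_ne (m := m) (i := i) (s := 1) (t := 2) (by omega) (by omega)))
    | succ t h1 ih =>
      intro h2
      exact mulpos _ _ _ (ih (by omega)) (step i t h1 h2)
  have all : ∀ i, 0 < cross2 (Q 0) (Q 1) (Q 2) * cross2 (Q i) (Q (i + 1)) (Q (i + 2)) := by
    intro i
    induction i with
    | zero => simpa using same 0 2 le_rfl (by omega)
    | succ i ih =>
      refine mulpos _ _ _ ih ?_
      have := same (i + 1) (m + 2) (by omega) (by omega)
      rw [show i + 1 + (m + 2) = i + (m + 3) by ring, per, mul_comm, ← cross_cyc (Q i)] at this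
      exact this
  refine ⟨cross2 (Q 0) (Q 1) (Q 2), ?_⟩
  set σ := cross2 (Q 0) (Q 1) (Q 2)
  have edge : ∀ i t, 2 ≤ t → t < m + 3 → 0 < σ * cross2 (Q i) (Q (i + 1)) (Q (i + t)) :=
    fun i t h1 h2 => mulpos _ _ _ (all i) (same i t h1 h2)
  have last : ∀ i j, i < j → j + 1 < m + 3 → 0 < σ * cross2 (Q i) (Q j) (Q (j + 1)) := by
    intro i j h1 h2
    have := edge j (i + (m + 3) - j) (by omega) (by omega)
    rwa [show j + (i + (m + 3) - j) = i + (m + 3) by omega, per, ← cross_cyc] at this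
  have main : ∀ i j k, i < j → j + 1 ≤ k → k < m + 3 → 0 < σ * cross2 (Q i) (Q j) (Q k) := by
    intro i j k hij hjk
    induction k, hjk using Nat.le_induction with
    | base => exact last i j hij
    | succ k hjk ih =>
      intro hk
      have e : ∀ k, i + 2 ≤ k → k < m + 3 → 0 < σ * cross2 (Q i) (Q (i + 1)) (Q k) := by
        intro k h1 h2
        have := edge i (k - i) (by omega) (by omega)
        rwa [show i + (k - i) = k by omega] at this
      rcases eq_or_lt_of_le (Nat.succ_le_of_lt hij) with h | h
      · rw [← h]
        exact e _ (by omega) hk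
      · have p := plucker (Q i) (Q (i + 1)) (Q j) (Q k) (Q (k + 1))
        have a1 := e j (by omega) (by omega)
        have a2 := e k (by omega) (by omega)
        have a3 := e (k + 1) (by omega) (by omega)
        have a4 := ih (by omega)
        have a5 := last i k (by omega) hk
        have : 0 < (σ * cross2 (Q i) (Q (i + 1)) (Q k)) * (σ * cross2 (Q i) (Q j) (Q (k + 1))) := by
          have := add_pos (mul_pos a1 a5) (mul_pos a3 a4)
          linear_combination this - σ ^ 2 * p
        exact (mul_pos_iff_of_pos_left a2).1 this
  intro i j k hij hjk
  have := main i j k hij hjk k.2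
  simpa [hQd] using this

lemma nested_nc {n : ℕ} {q : Fin n → Pt} {σ : ℝ}
    (hσ : ∀ i j k : Fin n, i < j → j < k → 0 < σ * cross2 (q i) (q j) (q k))
    {a b c d : Fin n} (hac : a ≤ c) (hcd : c < d) (hdb : d ≤ b) (hne : a ≠ c ∨ d ≠ b) :
    NC (q a) (q b) (q c) (q d) := by
  rintro X ⟨⟨s', t', -, -, h', hX'⟩, ⟨s, t, hs, ht, hst, hX⟩⟩
  have h0 : cross2 (q a) (q b) X = 0 := by
    rw [← hX', cross_lin _ _ _ _ _ _ h']; unfold cross2; ring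
  rw [← hX, cross_lin _ _ _ _ _ _ hst] at h0
  have neg : ∀ e, a < e → e < b → 0 < -(σ * cross2 (q a) (q b) (q e)) := by
    intro e h1 h2
    have := hσ a e b h1 h2
    convert this using 1
    unfold cross2; ring
  have zl : cross2 (q a) (q b) (q a) = 0 := by unfold cross2; ring
  have zr : cross2 (q a) (q b) (q b) = 0 := by unfold cross2; ring
  rcases eq_or_lt_of_le hac with rfl | hac
  · have hdb := lt_of_le_of_ne hdb (by simpa using hne)
    have := neg d hcd hdb
    have t0 : t = 0 := by
      rw [zl] at h0
      rcases mul_eq_zero.1 (show t * cross2 (q a) (q b) (q d) = 0 by linarith) with h | h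
      · exact h
      · rw [h] at this; simp at this
    have : X = q a := by rw [← hX, show s = 1 by linarith, t0]; simp
    simp [this]
  · have hc := neg c hac (lt_of_lt_of_le hcd hdb)
    rcases eq_or_lt_of_le hdb with rfl | hdb
    · have s0 : s = 0 := by
        rw [zr] at h0
        rcases mul_eq_zero.1 (show s * cross2 (q a) (q d) (q c) = 0 by linarith) with h | h
        · exact h
        · rw [h] at hc; simp at hc
      have : X = q d := by rw [← hX, show t = 1 by linarith, s0]; simp
      simp [this]
    · have hd := neg d (hac.trans hcd) hdb
      exfalso
      rcases eq_or_lt_of_le hs with h | h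
      · have : t = 1 := by linarith
        subst this; rw [← h] at h0
        have : cross2 (q a) (q b) (q d) = 0 := by linarith
        rw [this] at hd; simp at hd
      · have h5 := mul_pos h hc
        have h6 := mul_nonneg ht hd.le
        have h7 := congrArg (fun z => σ * z) h0
        linarith

/-- The zig-zag path `0, m + 1, 1, m, 2, …`. -/
def zig (m : ℕ) (k : Fin (m + 1)) : Fin (m + 3) :=
  if k.1 % 2 = 0 then ⟨k.1 / 2, by omega⟩ else ⟨m + 1 - k.1 / 2, by omega⟩

lemma zig_val (m : ℕ) (k : Fin (m + 1)) :
    (zig m k).1 = if k.1 % 2 = 0 then k.1 / 2 else m + 1 - k.1 / 2 := by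
  unfold zig; split_ifs <;> rfl

/-- Every convex polygon with `m + 3` vertices admits a straight-line planar polygon embedding
of the path graph on `m + 1` nodes (`m` edges): nodes map injectively to polygon vertices,
every path edge is a diagonal (its endpoints are non-adjacent in the polygon), and distinct
path edges meet at most in shared endpoints. -/
theorem stmt_1 (m : ℕ) (q : Fin (m + 3) → Pt) (hQ : IsConvexPolygon q) :
    ∃ f : Fin (m + 1) → Fin (m + 3),
      Function.Injective f ∧
      (∀ k : Fin m, ¬ adjV (f k.castSucc) (f k.succ)) ∧
      (∀ k l : Fin m, k ≠ l →
        NC (q (f k.castSucc)) (q (f k.succ)) (q (f l.castSucc)) (q (f l.succ))) := by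
  obtain ⟨σ, hσ⟩ := exists_sign m q hQ
  refine ⟨zig m, ?_, ?_, ?_⟩
  · intro k l h
    have h := congrArg Fin.val h
    rw [zig_val, zig_val] at h
    ext
    have := k.2
    have := l.2
    split_ifs at h <;> omega
  · intro k h
    have hk := k.2
    have one : (1 : Fin (m + 3)).1 = 1 := by simp
    have h2 : ∀ x y : Fin (m + 3), y = x + 1 → y.1 = x.1 + 1 ∨ (x.1 = m + 2 ∧ y.1 = 0) := by
      intro x y h
      have := congrArg Fin.val h
      rw [Fin.val_add, one] at this
      rcases Nat.lt_or_ge (x.1 + 1) (m + 3) with h' | h'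
      · rw [Nat.mod_eq_of_lt h'] at this; exact Or.inl this
      · have e : x.1 + 1 = m + 3 := by omega
        rw [e, Nat.mod_self] at this; exact Or.inr ⟨by omega, this⟩
    have e1 := zig_val m k.castSucc
    have e2 := zig_val m k.succ
    simp only [Fin.val_castSucc, Fin.val_succ] at e1 e2
    rcases h with h | h <;> rcases h2 _ _ h with h | h <;> rw [e1, e2] at h <;>
      split_ifs at h <;> omega
  · -- every path edge is the chord between `lo` and `hi`
    have key : ∀ k l : Fin m, k < l →
        NC (q (zig m k.castSucc)) (q (zig m k.succ)) (q (zig m l.castSucc)) (q (zig m l.succ)) := by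
      intro k l hkl
      have hk := k.2
      have hl := l.2
      have hkl' : k.1 < l.1 := hkl
      have e1 := zig_val m k.castSucc
      have e2 := zig_val m k.succ
      have e3 := zig_val m l.castSucc
      have e4 := zig_val m l.succ
      simp only [Fin.val_castSucc, Fin.val_succ] at e1 e2 e3 e4
      rcases Nat.mod_two_eq_zero_or_one k.1 with pk | pk <;>
        rcases Nat.mod_two_eq_zero_or_one l.1 with pl | pl
      · apply nested_nc hσ <;> simp only [Fin.le_def, Fin.lt_def, ne_eq, Fin.ext_iff] <;>
          simp only [e1, e2, e3, e4] <;> split_ifs <;> omega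
      · refine NC.swap (NC.swap1 (NC.swap ?_))
        apply nested_nc hσ <;> simp only [Fin.le_def, Fin.lt_def, ne_eq, Fin.ext_iff] <;>
          simp only [e1, e2, e3, e4] <;> split_ifs <;> omega
      · refine NC.swap1 ?_
        apply nested_nc hσ <;> simp only [Fin.le_def, Fin.lt_def, ne_eq, Fin.ext_iff] <;>
          simp only [e1, e2, e3, e4] <;> split_ifs <;> omega
      · refine NC.swap1 (NC.swap (NC.swap1 (NC.swap ?_)))
        apply nested_nc hσ <;> simp only [Fin.le_def, Fin.lt_def, ne_eq, Fin.ext_iff] <;>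
          simp only [e1, e2, e3, e4] <;> split_ifs <;> omega
    intro k l hkl
    rcases lt_or_gt_of_ne hkl with h | h
    · exact key k l h
    · exact (key l k h).swap
end

section
/- If a cycle graph C is planarly polygon-embedded into a simple polygon P with n vertices (each node of C mapped to a distinct vertex of P, each cycle edge drawn as a non-crossing diagonal of P, with no cycle edge equal to a polygon edge), then the number of nodes of C is at most ⌊n/2⌋. -/
open Set Function

namespace PolyEmb

/-- principal square root -/
noncomputable def sq (z : ℂ) : ℂ := Complex.exp (Complex.log z / 2)

lemma sq_sq {z : ℂ} (hz : z ≠ 0) : sq z ^ 2 = z := by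
  unfold sq
  rw [← Complex.exp_nat_mul]
  push_cast
  rw [mul_div_cancel₀ _ (by norm_num), Complex.exp_log hz]

lemma sq_ne (z : ℂ) : sq z ≠ 0 := Complex.exp_ne_zero _

lemma sq_cont {z : ℂ} (hz : z ∈ Complex.slitPlane) : ContinuousAt sq z := by
  unfold sq
  have := continuousAt_clog hz
  fun_prop

lemma sq_inv {z : ℂ} (hz : z ∈ Complex.slitPlane) : sq z⁻¹ = (sq z)⁻¹ := by
  unfold sq
  rw [Complex.log_inv _ (Complex.mem_slitPlane_iff_arg.1 hz).1, ← Complex.exp_neg]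
  congr 1; ring

lemma sq_scale {z w : ℂ} (hz : z ≠ 0) (hw : w ≠ 0) {t : ℝ} (ht : 0 < t) :
    sq (((t⁻¹ : ℝ) : ℂ) * z) * sq ((t : ℂ) * w) = sq z * sq w := by
  unfold sq
  rw [Complex.log_ofReal_mul ht hw, Complex.log_ofReal_mul (inv_pos.2 ht) hz,
    ← Complex.exp_add, ← Complex.exp_add, Real.log_inv]
  congr 1; push_cast; ring

lemma exp_pi_half : Complex.exp (Real.pi * Complex.I / 2) = Complex.I := by
  rw [show (Real.pi : ℂ) * Complex.I / 2 = (Real.pi : ℂ) / 2 * Complex.I by ring,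
    Complex.exp_pi_div_two_mul_I]

lemma sq_pos {z : ℂ} (hz : 0 < z.im) : sq z = Complex.I * sq (-z) := by
  unfold sq
  rw [← exp_pi_half, ← Complex.exp_add, Complex.log, Complex.log, norm_neg,
    Complex.arg_neg_eq_arg_sub_pi_of_im_pos hz]
  congr 1; push_cast; ring

lemma sq_neg {z : ℂ} (hz : z.im < 0) : sq z = -(Complex.I * sq (-z)) := by
  have h := sq_pos (z := -z) (by simpa using hz)
  rw [neg_neg] at h
  rw [h, ← mul_assoc, Complex.I_mul_I]; ring

lemma slit_aux {z : ℂ} (hz : z ∉ Complex.slitPlane) : ∃ s : ℝ, 0 ≤ s ∧ z = -(s : ℂ) := by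
  rw [Complex.mem_slitPlane_iff] at hz
  push Not at hz
  refine ⟨-z.re, by linarith [hz.1], ?_⟩
  apply Complex.ext <;> simp [hz.2]

lemma seg_aux {a b x : ℂ} {s : ℝ} (hs : 0 ≤ s) (hx : x ≠ a)
    (h : (b - x) / (a - x) = -(s : ℂ)) : x ∈ segment ℝ a b := by
  have h1 : a - x ≠ 0 := sub_ne_zero.2 (Ne.symm hx)
  rw [div_eq_iff h1] at h
  have hp : (0:ℝ) < 1 + s := by linarith
  have hpc : (1 + s : ℂ) ≠ 0 := by exact_mod_cast hp.ne'
  refine ⟨s / (1 + s), 1 / (1 + s), by positivity, by positivity, by field_simp; ring, ?_⟩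
  simp only [Complex.real_smul]
  push_cast
  field_simp
  linear_combination h

lemma slit_of {a b x : ℂ} (hx : x ∉ segment ℝ a b) : (b - x) / (a - x) ∈ Complex.slitPlane := by
  by_contra hc
  obtain ⟨s, hs, h⟩ := slit_aux hc
  refine hx (seg_aux hs ?_ h)
  rintro rfl
  exact hx (left_mem_segment ℝ _ _)

/-- edge factor -/
noncomputable def rr (a b x : ℂ) : ℂ := sq ((b - x) / (a - x))

lemma rr_ne (a b x : ℂ) : rr a b x ≠ 0 := sq_ne _

lemma rr_sq {a b x : ℂ} (ha : x ≠ a) (hb : x ≠ b) : rr a b x ^ 2 = (b - x) / (a - x) :=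
  sq_sq (div_ne_zero (sub_ne_zero.2 hb.symm) (sub_ne_zero.2 ha.symm))

lemma ne_left {a b x : ℂ} (hx : x ∉ segment ℝ a b) : x ≠ a := by
  rintro rfl; exact hx (left_mem_segment ℝ _ _)
lemma ne_right {a b x : ℂ} (hx : x ∉ segment ℝ a b) : x ≠ b := by
  rintro rfl; exact hx (right_mem_segment ℝ _ _)

lemma rr_cont {a b x : ℂ} (hx : x ∉ segment ℝ a b) : ContinuousAt (rr a b) x := by
  have h1 : a - x ≠ 0 := sub_ne_zero.2 (ne_left hx).symm
  have : ContinuousAt (fun x => (b - x) / (a - x)) x := by fun_prop (disch := assumption)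
  exact ContinuousAt.comp (g := sq) (sq_cont (slit_of hx)) this

lemma rr_swap {a b x : ℂ} (hx : x ∉ segment ℝ a b) : rr a b x * rr b a x = 1 := by
  unfold rr
  rw [show (a - x) / (b - x) = ((b - x) / (a - x))⁻¹ by rw [inv_div], sq_inv (slit_of hx)]
  exact mul_inv_cancel₀ (sq_ne _)

/-- corner limit -/
lemma corner {o α β w σ : ℂ} {R : ℂ → ℂ} (hR : ContinuousAt R o) (hα : α ≠ 0) (hβ : β ≠ 0)
    (hw : w ≠ 0) (h1 : -α / w ∈ Complex.slitPlane) (h2 : -w / β ∈ Complex.slitPlane)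
    (hS : ∀ t : ℝ, 0 < t → t < 1 →
      rr o (o + α) (o + t * w) * R (o + t * w) * rr (o + β) o (o + t * w) = σ) :
    σ = R o * (sq (-α / w) * sq (-w / β)) := by
  have hev : ∀ᶠ t : ℝ in nhdsWithin 0 (Set.Ioi 0),
      σ = R (o + t * w) * (sq ((α - t * w) / (-w)) * sq ((-w) / (β - t * w))) := by
    have e1 : ∀ᶠ t : ℝ in nhdsWithin 0 (Set.Ioi 0), α - t * w ≠ 0 := by
      apply Filter.Eventually.filter_mono nhdsWithin_le_nhds
      have : ContinuousAt (fun t : ℝ => α - t * w) 0 := by fun_prop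
      exact this.eventually_ne (by simpa using hα)
    have e2 : ∀ᶠ t : ℝ in nhdsWithin 0 (Set.Ioi 0), β - t * w ≠ 0 := by
      apply Filter.Eventually.filter_mono nhdsWithin_le_nhds
      have : ContinuousAt (fun t : ℝ => β - t * w) 0 := by fun_prop
      exact this.eventually_ne (by simpa using hβ)
    filter_upwards [e1, e2, Ioo_mem_nhdsGT (zero_lt_one (α := ℝ))] with t ht1 ht2 ht
    have htc : (t : ℂ) ≠ 0 := by exact_mod_cast ht.1.ne'
    rw [← hS t ht.1 ht.2]
    unfold rr
    have := sq_scale (z := (α - t * w) / (-w)) (w := (-w) / (β - t * w))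
      (div_ne_zero ht1 (neg_ne_zero.2 hw)) (div_ne_zero (neg_ne_zero.2 hw) ht2) ht.1
    rw [← this]
    have a1 : (o + α - (o + t * w)) / (o - (o + t * w)) =
        ((t⁻¹ : ℝ) : ℂ) * ((α - t * w) / (-w)) := by
      rw [show o + α - (o + t * w) = α - t * w by ring, show o - (o + t * w) = t * (-w) by ring]
      push_cast; field_simp
    have a2 : (o - (o + t * w)) / (o + β - (o + t * w)) =
        (t : ℂ) * ((-w) / (β - t * w)) := by
      rw [show o + β - (o + t * w) = β - t * w by ring, show o - (o + t * w) = t * (-w) by ring]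
      ring
    rw [a1, a2]; ring
  have hc : ContinuousAt (fun t : ℝ =>
      R (o + t * w) * (sq ((α - t * w) / (-w)) * sq ((-w) / (β - t * w)))) 0 := by
    refine ContinuousAt.mul ?_ (ContinuousAt.mul ?_ ?_)
    · refine ContinuousAt.comp (g := R) (f := fun t : ℝ => o + t * w) ?_ (by fun_prop)
      simpa using hR
    · refine ContinuousAt.comp (g := sq) (f := fun t : ℝ => (α - t * w) / (-w)) ?_ (by fun_prop)
      apply sq_cont
      simpa [div_neg, neg_div] using h1
    · refine ContinuousAt.comp (g := sq) (f := fun t : ℝ => (-w) / (β - t * w)) ?_ ?_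
      · apply sq_cont
        simpa using h2
      · have : β - ((0:ℝ):ℂ) * w ≠ 0 := by simpa using hβ
        fun_prop (disch := assumption)
  have hl : Filter.Tendsto (fun t : ℝ =>
      R (o + t * w) * (sq ((α - t * w) / (-w)) * sq ((-w) / (β - t * w))))
      (nhdsWithin 0 (Set.Ioi 0)) (nhds (R o * (sq (-α / w) * sq (-w / β)))) := by
    have := hc.tendsto.mono_left (nhdsWithin_le_nhds (s := Set.Ioi 0))
    simpa [div_neg, neg_div] using this
  have hl2 : Filter.Tendsto (fun _ : ℝ => σ)
      (nhdsWithin 0 (Set.Ioi 0)) (nhds (R o * (sq (-α / w) * sq (-w / β)))) :=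
    hl.congr' (hev.mono fun t ht => ht.symm)
  exact tendsto_nhds_unique tendsto_const_nhds hl2

lemma slit_dir {o a b : ℂ} (ha : a ≠ o) (hb : b ≠ o) (h1 : a ∉ segment ℝ o b)
    (h2 : b ∉ segment ℝ o a) : -(a - o) / (b - o) ∈ Complex.slitPlane := by
  by_contra hc
  obtain ⟨s, hs, h⟩ := slit_aux hc
  have hb' : b - o ≠ 0 := sub_ne_zero.2 hb
  rw [div_eq_iff hb'] at h
  have h' : a - o = s * (b - o) := by linear_combination -h
  rcases le_total s 1 with hs1 | hs1
  · apply h1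
    refine ⟨1 - s, s, by linarith, hs, by ring, ?_⟩
    simp only [Complex.real_smul]; push_cast
    linear_combination -h'
  · apply h2
    have hs0 : (0:ℝ) < s := by linarith
    have hsc : (s : ℂ) ≠ 0 := by exact_mod_cast hs0.ne'
    refine ⟨1 - s⁻¹, s⁻¹, ?_, by positivity, by ring, ?_⟩
    · have := inv_le_one_of_one_le₀ hs1; linarith
    · simp only [Complex.real_smul]; push_cast
      field_simp
      linear_combination h'

lemma slit_inv {z : ℂ} (hz : z ∈ Complex.slitPlane) : z⁻¹ ∈ Complex.slitPlane := by
  by_contra hc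
  obtain ⟨s, hs, h⟩ := slit_aux hc
  have hz0 := Complex.slitPlane_ne_zero hz
  have : z = ((-s⁻¹ : ℝ) : ℂ) := by
    rw [← inv_inv z, h]; push_cast; rw [inv_neg]
  rw [this, Complex.ofReal_mem_slitPlane] at hz
  have := inv_nonneg.2 hs
  linarith

/-- The key algebraic identity. -/
lemma key_identity {u1 u2 v : ℂ} (h1 : u1 ≠ 0) (h2 : u2 ≠ 0) (hv : v ≠ 0)
    (s1 : -u1 / v ∈ Complex.slitPlane) (s2 : -v / u2 ∈ Complex.slitPlane) :
    (sq (-u1 / u2) * sq (-u2 / v)) * (sq (-v / u1) * sq (-u1 / u2)) =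
      - (sq (-u1 / v) * sq (-v / u2)) := by
  have e1 : sq (-v / u1) = (sq (-u1 / v))⁻¹ := by
    rw [← sq_inv s1]; congr 1; field_simp
  have e2 : sq (-u2 / v) = (sq (-v / u2))⁻¹ := by
    rw [← sq_inv s2]; congr 1; field_simp
  have q1 := sq_sq (Complex.slitPlane_ne_zero s1)
  have q2 := sq_sq (Complex.slitPlane_ne_zero s2)
  have q3 : sq (-u1 / u2) ^ 2 = -u1 / u2 := sq_sq (div_ne_zero (neg_ne_zero.2 h1) h2)
  have n1 := sq_ne (-u1 / v)
  have n2 := sq_ne (-v / u2)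
  rw [e1, e2]
  have : sq (-u1 / u2) ^ 2 = - (sq (-u1 / v) ^ 2 * sq (-v / u2) ^ 2) := by
    rw [q1, q2, q3]; field_simp
  generalize sq (-u1 / v) = A at *
  generalize sq (-v / u2) = B at *
  generalize sq (-u1 / u2) = C at *
  field_simp
  linear_combination this

/-- arc product -/
noncomputable def arc (P : ℕ → ℂ) (i j : ℕ) (x : ℂ) : ℂ :=
  ∏ k ∈ Finset.Ico i j, rr (P k) (P (k + 1)) x

lemma arc_ne (P : ℕ → ℂ) (i j : ℕ) (x : ℂ) : arc P i j x ≠ 0 :=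
  Finset.prod_ne_zero_iff.2 fun _ _ => rr_ne _ _ _

lemma arc_cont {P : ℕ → ℂ} {i j : ℕ} {x : ℂ}
    (h : ∀ k, i ≤ k → k < j → x ∉ segment ℝ (P k) (P (k + 1))) : ContinuousAt (arc P i j) x := by
  unfold arc
  apply tendsto_finsetProd
  intro k hk
  rw [Finset.mem_Ico] at hk
  exact rr_cont (h k hk.1 hk.2)

lemma arc_sq {P : ℕ → ℂ} {i j : ℕ} {x : ℂ} (hij : i ≤ j)
    (h : ∀ k, i ≤ k → k ≤ j → x ≠ P k) : arc P i j x ^ 2 = (P j - x) / (P i - x) := by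
  induction j, hij using Nat.le_induction with
  | base =>
    have : P i - x ≠ 0 := sub_ne_zero.2 (h i le_rfl le_rfl).symm
    simp [arc, div_self this]
  | succ j hij ih =>
    have e : arc P i (j + 1) x = arc P i j x * rr (P j) (P (j + 1)) x := by
      unfold arc; rw [Finset.prod_Ico_succ_top hij]
    have h1 : P j - x ≠ 0 := sub_ne_zero.2 (h j hij (by omega)).symm
    have h2 : P i - x ≠ 0 := sub_ne_zero.2 (h i le_rfl (by omega)).symm
    rw [e, mul_pow, ih fun k a b => h k a (by omega),
      rr_sq (h j hij (by omega)) (h (j + 1) (by omega) le_rfl)]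
    field_simp

lemma const_on {S : ℂ → ℂ} {T : Set ℂ} (hT : IsPreconnected T)
    (hc : ∀ x ∈ T, ContinuousAt S x) (hs : ∀ x ∈ T, S x ^ 2 = 1) {x y : ℂ} (hx : x ∈ T)
    (hy : y ∈ T) : S x = S y := by
  have hcon : ContinuousOn S T := fun x hx => (hc x hx).continuousWithinAt
  rcases hT.eq_one_or_eq_neg_one_of_sq_eq hcon (fun x hx => by simpa using hs x hx) with h | h
  · rw [h hx, h hy]; rfl
  · rw [h hx, h hy]; rfl

/-- locally constant version -/
lemma ev_const {S : ℂ → ℂ} {x : ℂ} (hc : ContinuousAt S x) (hs : ∀ᶠ y in nhds x, S y ^ 2 = 1) :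
    ∃ σ : ℂ, σ ^ 2 = 1 ∧ ∀ᶠ y in nhds x, S y = σ := by
  refine ⟨S x, hs.self_of_nhds, ?_⟩
  have hx := hs.self_of_nhds
  have hne : S x ≠ - S x := by
    intro h
    have : S x = 0 := by linear_combination h / 2
    rw [this] at hx; norm_num at hx
  filter_upwards [hs, hc.eventually_ne hne] with y h1 h2
  rw [← hx] at h1
  rcases sq_eq_sq_iff_eq_or_eq_neg.1 h1 with h | h
  · exact h
  · exact absurd h h2

/-- data of a simple polygon in ℂ with ℕ-indexed vertices -/
structure Poly (P : ℕ → ℂ) (n : ℕ) : Prop where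
  three : 3 ≤ n
  close : P n = P 0
  inj : ∀ i j, i < n → j < n → P i = P j → i = j
  simple : ∀ i j, i < n → j < n → i ≠ j → ∀ z, z ∈ segment ℝ (P i) (P (i + 1)) →
    z ∈ segment ℝ (P j) (P (j + 1)) → (z = P i ∨ z = P (i + 1)) ∧ (z = P j ∨ z = P (j + 1))

lemma eps_lemma {a b y : ℂ} {K : Set ℂ} {U : Set ℂ} (hU : IsOpen U) (hy : y ∈ U)
    (hab : a ≠ b) (hya : y ≠ a) (hyb : y ≠ b) (hyE : y ∈ segment ℝ a b) (hK : closure (interior K) = K)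
    (hfr : frontier K ∩ U = segment ℝ a b ∩ U) :
    ∃ τ : ℂ, τ ^ 2 = 1 ∧ ∀ᶠ z in nhds y, z ∉ segment ℝ a b →
      open Classical in (if z ∈ K then (1:ℂ) else -1) =
        τ * (if 0 < ((b - z) / (a - z)).im then 1 else -1) ∧ ((b - z) / (a - z)).im ≠ 0 := by
  classical
  have hKc : IsClosed K := hK ▸ isClosed_closure
  -- the linear functional
  set l : ℂ → ℝ := fun z => ((b - a) * (starRingEnd ℂ) (a - z)).im with hl
  have him : ∀ z, ((b - z) / (a - z)).im = l z / Complex.normSq (a - z) := by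
    intro z
    rw [Complex.div_im]
    simp only [hl, Complex.mul_im, Complex.conj_re, Complex.conj_im, Complex.sub_re, Complex.sub_im]
    ring
  have hlc : Continuous l := by
    simp only [hl]; fun_prop
  have hlseg : ∀ z ∈ segment ℝ a b, l z = 0 := by
    rintro z ⟨s, t, hs, ht, hst, rfl⟩
    have : s = 1 - t := by linarith
    subst this
    simp [hl, Complex.mul_im]
    ring
  have hya' : a - y ≠ 0 := sub_ne_zero.2 hya.symm
  -- re < 0 near y
  have hre : ((b - y) / (a - y)).re < 0 := by
    obtain ⟨s, t, hs, ht, hst, h⟩ := hyE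
    simp only [Complex.real_smul] at h
    have hs' : s = 1 - t := by linarith
    subst hs'
    have ht0 : t ≠ 0 := by
      rintro rfl; apply hya; rw [← h]; simp
    have ht1 : 1 - t ≠ 0 := by
      intro h1; apply hyb; rw [← h, h1, show t = 1 by linarith]; simp
    have e : (b - y) / (a - y) = ((-((1 - t) / t) : ℝ) : ℂ) := by
      rw [div_eq_iff hya', ← h]
      have htc : (t : ℂ) ≠ 0 := by exact_mod_cast ht0
      push_cast
      field_simp
      ring
    rw [e, Complex.ofReal_re]
    have : 0 < (1 - t) / t := div_pos (lt_of_le_of_ne hs ht1.symm) (lt_of_le_of_ne ht ht0.symm)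
    linarith
  have hqc : ContinuousAt (fun z => ((b - z) / (a - z)).re) y := by
    have : ContinuousAt (fun z => (b - z) / (a - z)) y := by fun_prop (disch := assumption)
    exact Complex.continuous_re.continuousAt.comp this
  have hre' : ∀ᶠ z in nhds y, ((b - z) / (a - z)).re < 0 := hqc.eventually_lt continuousAt_const hre
  obtain ⟨r, hr, hball⟩ := Metric.mem_nhds_iff.1
    (Filter.inter_mem (Filter.inter_mem (hU.mem_nhds hy) hre')
      (isOpen_ne.mem_nhds hya : {z | z ≠ a} ∈ nhds y))
  -- density of l ≠ 0
  have hdense : Dense {z | l z ≠ 0} := by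
    intro z
    rw [Metric.mem_closure_iff]
    intro ε hε
    by_cases hz : l z = 0
    · have hba : b - a ≠ 0 := sub_ne_zero.2 hab.symm
      have hn : 0 < ‖b - a‖ := norm_pos_iff.2 hba
      refine ⟨z + ((ε / 2 / ‖b - a‖ : ℝ) : ℂ) * (Complex.I * (b - a)), ?_, ?_⟩
      · have : l (z + ((ε / 2 / ‖b - a‖ : ℝ) : ℂ) * (Complex.I * (b - a))) =
            l z + (ε / 2 / ‖b - a‖) * Complex.normSq (b - a) := by
          simp only [hl, Complex.mul_im, Complex.conj_re, Complex.conj_im, Complex.sub_re,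
            Complex.sub_im, Complex.add_re, Complex.add_im, Complex.mul_re, Complex.ofReal_re,
            Complex.ofReal_im, Complex.I_re, Complex.I_im, Complex.normSq_apply]
          ring
        show l _ ≠ 0
        rw [this, hz, zero_add]
        have := Complex.normSq_pos.2 hba
        positivity
      · rw [dist_self_add_right, norm_mul, norm_mul, Complex.norm_I, Complex.norm_real,
          Real.norm_of_nonneg (by positivity), one_mul, div_mul_cancel₀ _ hn.ne']
        linarith
    · exact ⟨z, hz, by simpa using hε⟩
  -- side sets
  have hBU : ∀ z ∈ Metric.ball y r, z ∈ U := fun z hz => (hball hz).1.1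
  have side : ∀ T : Set ℂ, Convex ℝ T → T ⊆ Metric.ball y r → (∀ z ∈ T, l z ≠ 0) →
      (∀ z ∈ T, ∀ w ∈ T, z ∈ K → w ∈ K) := by
    intro T hT hTb hTl z hz w hw hzK
    by_contra hwK
    have hpre := hT.isPreconnected
    have h3 := isPreconnected_iff_subset_of_disjoint.1 hpre (interior K) Kᶜ isOpen_interior
      hKc.isOpen_compl ?_ ?_
    · rcases h3 with h3 | h3
      · exact hwK (interior_subset (h3 hw))
      · exact h3 hz hzK
    · intro x hx
      by_cases hxK : x ∈ K
      · left
        by_contra hxi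
        have hxf : x ∈ frontier K := ⟨subset_closure hxK, hxi⟩
        have : x ∈ segment ℝ a b ∩ U := hfr ▸ ⟨hxf, hBU x (hTb hx)⟩
        exact hTl x hx (hlseg x this.1)
      · right; exact hxK
    · ext x
      simp only [Set.mem_inter_iff, Set.mem_compl_iff, Set.mem_empty_iff_false, iff_false]
      rintro ⟨_, h, h'⟩
      exact h' (interior_subset h)
  have hlin : ∃ L : ℂ →ₗ[ℝ] ℝ, ∃ c, ∀ z, l z = L z + c := by
    refine ⟨-(b - a).im • Complex.reLm + (b - a).re • Complex.imLm, (b-a).im * a.re - (b-a).re * a.im, fun z => ?_⟩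
    simp [hl, Complex.mul_im]
    ring
  obtain ⟨L, c, hL⟩ := hlin
  set Tp : Set ℂ := Metric.ball y r ∩ {z | 0 < l z} with hTp
  set Tm : Set ℂ := Metric.ball y r ∩ {z | l z < 0} with hTm
  have cp : Convex ℝ Tp := by
    refine (convex_ball y r).inter ?_
    have : {z | 0 < l z} = {z | -c < L z} := by ext z; simp [hL]; constructor <;> intro h <;> linarith
    rw [this]; exact convex_halfSpace_gt L.isLinear _
  have cm : Convex ℝ Tm := by
    refine (convex_ball y r).inter ?_
    have : {z | l z < 0} = {z | L z < -c} := by ext z; simp [hL]; constructor <;> intro h <;> linarith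
    rw [this]; exact convex_halfSpace_lt L.isLinear _
  have sp := side Tp cp Set.inter_subset_left (fun z hz => ne_of_gt hz.2)
  have sm := side Tm cm Set.inter_subset_left (fun z hz => ne_of_lt hz.2)
  have hyF : y ∈ frontier K := by
    have : y ∈ frontier K ∩ U := hfr ▸ ⟨hyE, hy⟩
    exact this.1
  have hyK : y ∈ K := hKc.frontier_subset hyF
  -- not both out
  have hin : ∃ z ∈ Metric.ball y r, l z ≠ 0 ∧ z ∈ K := by
    rw [← hK] at hyK
    obtain ⟨z, hz1, hz2⟩ := mem_closure_iff.1 hyK _ Metric.isOpen_ball (Metric.mem_ball_self hr)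
    obtain ⟨w, hw1, hw2⟩ := hdense.inter_open_nonempty _ (Metric.isOpen_ball.inter isOpen_interior)
      ⟨z, hz1, hz2⟩
    exact ⟨w, hw1.1, hw2, interior_subset hw1.2⟩
  have hout : ∃ z ∈ Metric.ball y r, l z ≠ 0 ∧ z ∉ K := by
    by_contra hcon
    push Not at hcon
    apply hyF.2
    rw [mem_interior]
    refine ⟨Metric.ball y r, ?_, Metric.isOpen_ball, Metric.mem_ball_self hr⟩
    have h1 := hdense.open_subset_closure_inter (Metric.isOpen_ball (x := y) (ε := r))
    refine h1.trans (closure_minimal ?_ hKc)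
    rintro z ⟨hz1, hz2⟩
    exact hcon z hz1 hz2
  have hsign : ∀ z ∈ Metric.ball y r, (0 < ((b - z) / (a - z)).im ↔ 0 < l z) ∧
      (((b - z) / (a - z)).im = 0 ↔ l z = 0) := by
    intro z hz
    have hza : z ≠ a := (hball hz).2
    have := Complex.normSq_pos.2 (sub_ne_zero.2 hza.symm)
    rw [him]
    exact ⟨div_pos_iff_of_pos_right this, by rw [div_eq_zero_iff]; simp [this.ne']⟩
  have hz0 : ∀ z ∈ Metric.ball y r, z ∉ segment ℝ a b → l z ≠ 0 := by
    intro z hz hzE h0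
    have him0 := (hsign z hz).2.2 h0
    have hre0 : ((b - z) / (a - z)).re < 0 := (hball hz).1.2
    apply hzE
    refine seg_aux (s := -((b - z) / (a - z)).re) (by linarith) (hball hz).2 ?_
    apply Complex.ext
    · simp
    · rw [him0]; simp
  obtain ⟨z1, hz1, hl1, hk1⟩ := hin
  obtain ⟨z2, hz2, hl2, hk2⟩ := hout
  rcases lt_or_gt_of_ne hl1 with h1 | h1
  · -- minus side in
    have hp : ∀ z ∈ Tp, z ∉ K := by
      rcases lt_or_gt_of_ne hl2 with h2 | h2
      · exact absurd (sm z1 ⟨hz1, h1⟩ z2 ⟨hz2, h2⟩ hk1) hk2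
      · exact fun z hz hzK => hk2 (sp z hz z2 ⟨hz2, h2⟩ hzK)
    refine ⟨-1, by norm_num, ?_⟩
    filter_upwards [Metric.ball_mem_nhds y hr] with z hz hzE
    have hn := hz0 z hz hzE
    refine ⟨?_, fun h => hn ((hsign z hz).2.1 h)⟩
    rcases lt_or_gt_of_ne hn with h | h
    · rw [if_pos (sm z1 ⟨hz1, h1⟩ z ⟨hz, h⟩ hk1), if_neg (by rw [(hsign z hz).1]; linarith)]; norm_num
    · rw [if_neg (hp z ⟨hz, h⟩), if_pos ((hsign z hz).1.2 h)]; norm_num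
  · have hp : ∀ z ∈ Tm, z ∉ K := by
      rcases lt_or_gt_of_ne hl2 with h2 | h2
      · exact fun z hz hzK => hk2 (sm z hz z2 ⟨hz2, h2⟩ hzK)
      · exact absurd (sp z1 ⟨hz1, h1⟩ z2 ⟨hz2, h2⟩ hk1) hk2
    refine ⟨1, by norm_num, ?_⟩
    filter_upwards [Metric.ball_mem_nhds y hr] with z hz hzE
    have hn := hz0 z hz hzE
    refine ⟨?_, fun h => hn ((hsign z hz).2.1 h)⟩
    rcases lt_or_gt_of_ne hn with h | h
    · rw [if_neg (hp z ⟨hz, h⟩), if_neg (by rw [(hsign z hz).1]; linarith)]; norm_num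
    · rw [if_pos (sp z1 ⟨hz1, h1⟩ z ⟨hz, h⟩ hk1), if_pos ((hsign z hz).1.2 h)]; norm_num

lemma re_neg {a b y : ℂ} (hya : y ≠ a) (hyb : y ≠ b) (hyE : y ∈ segment ℝ a b) :
    ((b - y) / (a - y)).re < 0 := by
  have hya' : a - y ≠ 0 := sub_ne_zero.2 hya.symm
  obtain ⟨s, t, hs, ht, hst, h⟩ := hyE
  simp only [Complex.real_smul] at h
  have hs' : s = 1 - t := by linarith
  subst hs'
  have ht0 : t ≠ 0 := by
    rintro rfl; apply hya; rw [← h]; simp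
  have ht1 : 1 - t ≠ 0 := by
    intro h1; apply hyb; rw [← h, h1, show t = 1 by linarith]; simp
  have e : (b - y) / (a - y) = ((-((1 - t) / t) : ℝ) : ℂ) := by
    rw [div_eq_iff hya', ← h]
    have htc : (t : ℂ) ≠ 0 := by exact_mod_cast ht0
    push_cast
    field_simp
    ring
  rw [e, Complex.ofReal_re]
  have : 0 < (1 - t) / t := div_pos (lt_of_le_of_ne hs ht1.symm) (lt_of_le_of_ne ht ht0.symm)
  linarith

lemma Poly.succ_ne {P : ℕ → ℂ} {n : ℕ} (hP : Poly P n) {k : ℕ} (hk : k < n) : P k ≠ P (k + 1) := by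
  intro h
  have h3 := hP.three
  rcases Nat.lt_or_ge (k + 1) n with h1 | h1
  · have := hP.inj _ _ hk h1 h; omega
  · have : k + 1 = n := by omega
    rw [this, hP.close] at h
    have := hP.inj _ _ hk (by omega) h; omega

lemma Poly.sq_one {P : ℕ → ℂ} {n : ℕ} (hP : Poly P n) {z : ℂ} (hz : ∀ k < n, z ≠ P k) :
    arc P 0 n z ^ 2 = 1 := by
  have h3 := hP.three
  rw [arc_sq (Nat.zero_le n), hP.close, div_self]
  · exact sub_ne_zero.2 (hz 0 (by omega)).symm
  · intro k _ hk
    rcases Nat.lt_or_ge k n with h | h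
    · exact hz k h
    · rw [show k = n by omega, hP.close]; exact hz 0 (by omega)

lemma isClosed_seg (a b : ℂ) : IsClosed (segment ℝ a b) := by
  rw [← convexHull_pair]
  exact (Set.Finite.isCompact_convexHull (𝕜 := ℝ) (Set.toFinite {a, b})).isClosed

lemma local_const {P : ℕ → ℂ} {n : ℕ} (hP : Poly P n) {K : Set ℂ} (hK : closure (interior K) = K)
    (hfr : ∀ z, z ∈ frontier K ↔ ∃ k < n, z ∈ segment ℝ (P k) (P (k + 1)))
    {y : ℂ} (hy : ∀ k < n, y ≠ P k) :
    ∃ σ : ℂ, σ ^ 2 = 1 ∧ ∀ᶠ z in nhds y, z ∉ frontier K →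
      arc P 0 n z * (open Classical in (if z ∈ K then (1:ℂ) else -1)) = σ := by
  classical
  have hKc : IsClosed K := hK ▸ isClosed_closure
  have h3 := hP.three
  have hVev : ∀ᶠ z in nhds y, ∀ k < n, z ≠ P k := by
    have : ∀ᶠ z in nhds y, ∀ k ∈ Finset.range n, z ≠ P k := by
      rw [Filter.eventually_all_finset]
      intro k hk
      exact isOpen_ne.mem_nhds (hy k (Finset.mem_range.1 hk))
    filter_upwards [this] with z hz k hk using hz k (Finset.mem_range.2 hk)
  have hy' : ∀ k < n, y ≠ P (k + 1) := by
    intro k hk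
    rcases Nat.lt_or_ge (k + 1) n with h | h
    · exact hy _ h
    · rw [show k + 1 = n by omega, hP.close]; exact hy 0 (by omega)
  by_cases hyE : y ∈ frontier K
  · obtain ⟨k, hk, hyk⟩ := (hfr y).1 hyE
    set U : Set ℂ := ⋂ j ∈ (Finset.range n).erase k, (segment ℝ (P j) (P (j + 1)))ᶜ with hUdef
    have hU : IsOpen U := isOpen_biInter_finset fun j _ => (isClosed_seg _ _).isOpen_compl
    have hyj : ∀ j < n, j ≠ k → y ∉ segment ℝ (P j) (P (j + 1)) := by
      intro j hj hjk h
      rcases (hP.simple j k hj hk hjk y h hyk).1 with h | h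
      · exact hy j hj h
      · exact hy' j hj h
    have hyU : y ∈ U := by
      simp only [hUdef, Set.mem_iInter, Finset.mem_erase, Finset.mem_range]
      exact fun j hj => hyj j hj.2 hj.1
    have hfrU : frontier K ∩ U = segment ℝ (P k) (P (k + 1)) ∩ U := by
      ext z
      constructor
      · rintro ⟨h1, h2⟩
        obtain ⟨j, hj, hz⟩ := (hfr z).1 h1
        refine ⟨?_, h2⟩
        by_cases hjk : j = k
        · rwa [← hjk]
        · simp only [hUdef, Set.mem_iInter, Finset.mem_erase, Finset.mem_range] at h2
          exact absurd hz (h2 j ⟨hjk, hj⟩)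
      · rintro ⟨h1, h2⟩
        exact ⟨(hfr z).2 ⟨k, hk, h1⟩, h2⟩
    obtain ⟨τ, hτ, hev⟩ := eps_lemma hU hyU (hP.succ_ne hk) (hy k hk) (hy' k hk) hyk hK hfrU
    set O : ℂ → ℂ := fun z => ∏ j ∈ (Finset.Ico 0 n).erase k, rr (P j) (P (j + 1)) z with hO
    set C : ℂ → ℂ := fun z => Complex.I * sq (-((P (k + 1) - z) / (P k - z))) * O z with hC
    have harc : ∀ z, arc P 0 n z = rr (P k) (P (k + 1)) z * O z := by
      intro z
      unfold arc
      rw [Finset.mul_prod_erase _ (fun j => rr (P j) (P (j + 1)) z) (by simp [hk])]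
    have hCc : ContinuousAt C y := by
      refine ContinuousAt.mul (ContinuousAt.mul continuousAt_const ?_) ?_
      · have h1 : P k - y ≠ 0 := sub_ne_zero.2 (hy k hk).symm
        have : ContinuousAt (fun x => -((P (k + 1) - x) / (P k - x))) y := by
          fun_prop (disch := assumption)
        refine ContinuousAt.comp (g := sq) (sq_cont ?_) this
        left
        have := re_neg (hy k hk) (hy' k hk) hyk
        rw [Complex.neg_re]; linarith
      · simp only [hO]
        apply tendsto_finsetProd
        intro j hj
        simp only [Finset.mem_erase, Finset.mem_Ico] at hj
        exact rr_cont (hyj j hj.2.2 hj.1)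
    have hCs : ∀ᶠ z in nhds y, C z ^ 2 = 1 := by
      filter_upwards [hVev] with z hz
      have h1 := hP.sq_one hz
      have hz' : z ≠ P (k + 1) := by
        rcases Nat.lt_or_ge (k + 1) n with h | h
        · exact hz _ h
        · rw [show k + 1 = n by omega, hP.close]; exact hz 0 (by omega)
      rw [harc, mul_pow, rr_sq (hz k hk) hz'] at h1
      simp only [hC]
      rw [mul_pow, mul_pow, sq_sq, Complex.I_sq]
      · linear_combination h1
      · exact neg_ne_zero.2 (div_ne_zero (sub_ne_zero.2 hz'.symm) (sub_ne_zero.2 (hz k hk).symm))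
    obtain ⟨σ, hσ, hσe⟩ := ev_const hCc hCs
    refine ⟨σ * τ, by rw [mul_pow, hσ, hτ, one_mul], ?_⟩
    filter_upwards [hev, hσe] with z h1 h2 h3
    obtain ⟨h4, h5⟩ := h1 fun h => h3 ((hfr z).2 ⟨k, hk, h⟩)
    rw [h4, harc, ← h2]
    simp only [hC, rr]
    rcases lt_or_gt_of_ne h5 with h | h
    · rw [if_neg (by linarith), sq_neg h]; ring
    · rw [if_pos h, sq_pos h]; ring
  · have hyj : ∀ j < n, y ∉ segment ℝ (P j) (P (j + 1)) := fun j hj h => hyE ((hfr y).2 ⟨j, hj, h⟩)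
    obtain ⟨σ, hσ, hσe⟩ := ev_const (S := arc P 0 n) (x := y) (arc_cont fun k _ hk => hyj k hk)
      (hVev.mono fun z hz => hP.sq_one hz)
    by_cases hyK : y ∈ K
    · have : y ∈ interior K := by
        by_contra h; exact hyE ⟨subset_closure hyK, h⟩
      refine ⟨σ, hσ, ?_⟩
      filter_upwards [hσe, isOpen_interior.mem_nhds this] with z h1 h2 _
      rw [h1, if_pos (interior_subset h2), mul_one]
    · refine ⟨-σ, by rw [neg_sq, hσ], ?_⟩
      filter_upwards [hσe, hKc.isOpen_compl.mem_nhds hyK] with z h1 h2 _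
      rw [h1, if_neg h2]; ring

lemma side_eq {P : ℕ → ℂ} {n : ℕ} (hP : Poly P n) {K : Set ℂ} (hK : closure (interior K) = K)
    (hfr : ∀ z, z ∈ frontier K ↔ ∃ k < n, z ∈ segment ℝ (P k) (P (k + 1)))
    {x y : ℂ} (hx : x ∈ K) (hy : y ∈ K) (hxE : x ∉ frontier K) (hyE : y ∉ frontier K) :
    arc P 0 n x = arc P 0 n y := by
  classical
  have hKc : IsClosed K := hK ▸ isClosed_closure
  set V : Set ℂ := P '' (Set.Iio n) with hV
  have hVc : V.Countable := ((Set.finite_Iio n).image P).countable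
  have hpre : IsPreconnected Vᶜ :=
    (hVc.isPathConnected_compl_of_one_lt_rank (by simp)).isConnected.isPreconnected
  have hmem : ∀ z, z ∈ Vᶜ ↔ ∀ k < n, z ≠ P k := by
    intro z
    simp only [hV, Set.mem_compl_iff, Set.mem_image, Set.mem_Iio, not_exists, not_and]
    exact ⟨fun h k hk e => h k hk e.symm, fun h k hk e => h k hk e.symm⟩
  set h : ℂ → ℂ := fun z => arc P 0 n z * (if z ∈ K then (1:ℂ) else -1) with hh
  let A : ℂ → Set ℂ := fun σ => {y | ∀ᶠ z in nhds y, z ∉ frontier K → h z = σ}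
  have hAo : ∀ σ, IsOpen (A σ) := by
    intro σ
    exact isOpen_setOfPred_eventually_nhds
  have hcov : Vᶜ ⊆ A 1 ∪ A (-1) := by
    intro z hz
    obtain ⟨σ, hσ, hev⟩ := local_const hP hK hfr ((hmem z).1 hz)
    rcases (by simpa using hσ : σ = 1 ∨ σ = -1) with h1 | h1
    · left; rw [h1] at hev; exact hev
    · right; rw [h1] at hev; exact hev
  have hdis : Vᶜ ∩ (A 1 ∩ A (-1)) = ∅ := by
    rw [Set.eq_empty_iff_forall_notMem]
    rintro z ⟨_, h1, h2⟩
    have h3 : ∀ᶠ w in nhds z, w ∈ frontier K := by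
      filter_upwards [h1, h2] with w a b
      by_contra hc
      have := (a hc).symm.trans (b hc)
      norm_num at this
    have : z ∈ interior (frontier K) := mem_interior_iff_mem_nhds.2 h3
    rw [interior_frontier hKc] at this
    exact this
  have hV' : ∀ z, z ∉ frontier K → z ∈ Vᶜ := by
    intro z hz
    rw [hmem]
    intro k hk e
    exact hz ((hfr z).2 ⟨k, hk, e ▸ left_mem_segment ℝ _ _⟩)
  have hval : ∃ σ, h x = σ ∧ h y = σ := by
    rcases isPreconnected_iff_subset_of_disjoint.1 hpre (A 1) (A (-1)) (hAo _) (hAo _) hcov hdis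
      with h1 | h1
    · exact ⟨1, (h1 (hV' x hxE)).self_of_nhds hxE, (h1 (hV' y hyE)).self_of_nhds hyE⟩
    · exact ⟨-1, (h1 (hV' x hxE)).self_of_nhds hxE, (h1 (hV' y hyE)).self_of_nhds hyE⟩
  obtain ⟨σ, h1, h2⟩ := hval
  simp only [hh, if_pos hx, if_pos hy, mul_one] at h1 h2
  rw [h1, h2]

lemma pt_mem {a b : ℂ} {t : ℝ} (h0 : 0 ≤ t) (h1 : t ≤ 1) : a + t * (b - a) ∈ segment ℝ a b := by
  refine ⟨1 - t, t, by linarith, h0, by ring, ?_⟩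
  simp only [Complex.real_smul]; push_cast; ring

lemma pt_ne_right {a b : ℂ} (hab : a ≠ b) {t : ℝ} (h1 : t < 1) : a + t * (b - a) ≠ b := by
  intro h
  have : ((1 - t : ℝ) : ℂ) * (b - a) = 0 := by push_cast; linear_combination -h
  rcases mul_eq_zero.1 this with h | h
  · have : 1 - t = 0 := by exact_mod_cast h
    linarith
  · exact hab (sub_eq_zero.1 h).symm

lemma pt_ne_left {a b : ℂ} (hab : a ≠ b) {t : ℝ} (h1 : 0 < t) : a + t * (b - a) ≠ a := by
  intro h
  have : (t : ℂ) * (b - a) = 0 := by linear_combination h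
  rcases mul_eq_zero.1 this with h | h
  · have : t = 0 := by exact_mod_cast h
    linarith
  · exact hab (sub_eq_zero.1 h).symm

lemma const_line {S : ℂ → ℂ} {a b : ℂ} {I : Set ℝ} (hI : I.OrdConnected)
    (hg : ∀ t ∈ I, ContinuousAt S (a + t * (b - a)) ∧ S (a + t * (b - a)) ^ 2 = 1)
    {s t : ℝ} (hs : s ∈ I) (ht : t ∈ I) : S (a + s * (b - a)) = S (a + t * (b - a)) := by
  have hT : IsPreconnected ((fun t : ℝ => a + t * (b - a)) '' I) :=
    hI.isPreconnected.image _ (by fun_prop)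
  refine const_on hT ?_ ?_ ⟨s, hs, rfl⟩ ⟨t, ht, rfl⟩
  · rintro _ ⟨t, ht, rfl⟩; exact (hg t ht).1
  · rintro _ ⟨t, ht, rfl⟩; exact (hg t ht).2

lemma corner' {o A B W σ : ℂ} {R : ℂ → ℂ} (hR : ContinuousAt R o) (hα : A ≠ o) (hβ : B ≠ o)
    (hw : W ≠ o) (h1 : -(A - o) / (W - o) ∈ Complex.slitPlane)
    (h2 : -(W - o) / (B - o) ∈ Complex.slitPlane)
    (hS : ∀ t : ℝ, 0 < t → t < 1 →
      rr o A (o + t * (W - o)) * R (o + t * (W - o)) * rr B o (o + t * (W - o)) = σ) :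
    σ = R o * (sq (-(A - o) / (W - o)) * sq (-(W - o) / (B - o))) := by
  refine corner hR (sub_ne_zero.2 hα) (sub_ne_zero.2 hβ) (sub_ne_zero.2 hw) h1 h2 ?_
  simpa using hS

lemma arc_split {P : ℕ → ℂ} {i j k : ℕ} (h1 : i ≤ j) (h2 : j ≤ k) (x : ℂ) :
    arc P i k x = arc P i j x * arc P j k x :=
  (Finset.prod_Ico_consecutive _ h1 h2).symm

lemma arc_one (P : ℕ → ℂ) (i : ℕ) (x : ℂ) : arc P i (i + 1) x = rr (P i) (P (i + 1)) x := by
  simp [arc]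

lemma Poly.inj' {P : ℕ → ℂ} {n : ℕ} (hP : Poly P n) {i j : ℕ} (hi : i ≤ n) (hj : j ≤ n)
    (h : P i = P j) : i = j ∨ (i = 0 ∧ j = n) ∨ (i = n ∧ j = 0) := by
  have h3 := hP.three
  rcases Nat.lt_or_ge i n with h1 | h1 <;> rcases Nat.lt_or_ge j n with h2 | h2
  · left; exact hP.inj i j h1 h2 h
  · have : j = n := by omega
    subst this
    rw [hP.close] at h
    have := hP.inj i 0 h1 (by omega) h
    omega
  · have : i = n := by omega
    subst this
    rw [hP.close] at h
    have := hP.inj 0 j (by omega) h2 h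
    omega
  · omega

lemma Poly.ne {P : ℕ → ℂ} {n : ℕ} (hP : Poly P n) {i j : ℕ} (hi : i ≤ n) (hj : j ≤ n)
    (h : i ≠ j ∧ ¬ (i = 0 ∧ j = n) ∧ ¬ (i = n ∧ j = 0)) : P i ≠ P j := by
  intro e
  have := hP.inj' hi hj e
  tauto

theorem no_interleave {P : ℕ → ℂ} {n : ℕ} (hP : Poly P n) {K : Set ℂ}
    (hK : closure (interior K) = K)
    (hfr : ∀ z, z ∈ frontier K ↔ ∃ k < n, z ∈ segment ℝ (P k) (P (k + 1)))
    {b c d : ℕ} (hb : 0 < b) (hbc : b < c) (hcd : c < d) (hdn : d < n)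
    (h1 : ∀ i < n, ∀ z ∈ segment ℝ (P 0) (P c), z ∈ segment ℝ (P i) (P (i + 1)) →
      (z = P 0 ∨ z = P c) ∧ (z = P i ∨ z = P (i + 1)))
    (h2 : ∀ i < n, ∀ z ∈ segment ℝ (P b) (P d), z ∈ segment ℝ (P i) (P (i + 1)) →
      (z = P b ∨ z = P d) ∧ (z = P i ∨ z = P (i + 1)))
    (hX : ∀ z ∈ segment ℝ (P 0) (P c), z ∉ segment ℝ (P b) (P d))
    (hK1 : segment ℝ (P 0) (P c) ⊆ K) (hK2 : segment ℝ (P b) (P d) ⊆ K) : False := by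
  have hn1 : n - 1 + 1 = n := by omega
  -- good points
  let S1 : ℂ → ℂ := fun x => arc P 0 c x * rr (P c) (P 0) x
  let S2 : ℂ → ℂ := fun x => rr (P 0) (P c) x * arc P c n x
  have good1 : ∀ x, (∀ k < c, x ∉ segment ℝ (P k) (P (k + 1))) → x ∉ segment ℝ (P 0) (P c) →
      ContinuousAt S1 x ∧ S1 x ^ 2 = 1 := by
    intro x ha hb'
    refine ⟨(arc_cont fun k _ hk => ha k hk).mul (rr_cont (by rwa [segment_symm])), ?_⟩
    have hx0 := ne_left hb'
    have hxc := ne_right hb'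
    have e0 : P 0 - x ≠ 0 := sub_ne_zero.2 hx0.symm
    have ec : P c - x ≠ 0 := sub_ne_zero.2 hxc.symm
    simp only [S1]
    rw [mul_pow, arc_sq (Nat.zero_le c), rr_sq hxc hx0]
    · field_simp
    · intro k _ hk
      rcases Nat.lt_or_ge k c with h | h
      · exact ne_left (ha k h)
      · rw [show k = c by omega]; exact hxc
  have good2 : ∀ x, (∀ k, c ≤ k → k < n → x ∉ segment ℝ (P k) (P (k + 1))) →
      x ∉ segment ℝ (P 0) (P c) → ContinuousAt S2 x ∧ S2 x ^ 2 = 1 := by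
    intro x ha hb'
    refine ⟨(rr_cont hb').mul (arc_cont fun k hk hk' => ha k hk hk'), ?_⟩
    have hx0 := ne_left hb'
    have hxc := ne_right hb'
    have e0 : P 0 - x ≠ 0 := sub_ne_zero.2 hx0.symm
    have ec : P c - x ≠ 0 := sub_ne_zero.2 hxc.symm
    simp only [S2]
    rw [mul_pow, arc_sq (by omega), rr_sq hx0 hxc, hP.close]
    · field_simp
    · intro k hk hk'
      rcases Nat.lt_or_ge k n with h | h
      · exact ne_left (ha k hk h)
      · rw [show k = n by omega, hP.close]; exact hx0
  -- points of d2
  have gd1 : ∀ z ∈ segment ℝ (P b) (P d), z ≠ P b → ContinuousAt S1 z ∧ S1 z ^ 2 = 1 := by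
    intro z hz hzb
    refine good1 z ?_ (fun h => hX z h hz)
    intro k hk hzk
    obtain ⟨hA, hB⟩ := h2 k (by omega) z hz hzk
    rcases hA with hA | hA
    · exact hzb hA
    · rcases hB with hB | hB
      · exact hP.ne (i := d) (j := k) (by omega) (by omega) (by omega) (hA.symm.trans hB)
      · exact hP.ne (i := d) (j := k + 1) (by omega) (by omega) (by omega) (hA.symm.trans hB)
  have gd2 : ∀ z ∈ segment ℝ (P b) (P d), z ≠ P d → ContinuousAt S2 z ∧ S2 z ^ 2 = 1 := by
    intro z hz hzb
    refine good2 z ?_ (fun h => hX z h hz)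
    intro k hk hk' hzk
    obtain ⟨hA, hB⟩ := h2 k (by omega) z hz hzk
    rcases hA with hA | hA
    · rcases hB with hB | hB
      · exact hP.ne (i := b) (j := k) (by omega) (by omega) (by omega) (hA.symm.trans hB)
      · exact hP.ne (i := b) (j := k + 1) (by omega) (by omega) (by omega) (hA.symm.trans hB)
    · exact hzb hA
  -- points of the arcs
  have ga1 : ∀ k, d ≤ k → k < n → ∀ z ∈ segment ℝ (P k) (P (k + 1)), z ≠ P 0 →
      ContinuousAt S1 z ∧ S1 z ^ 2 = 1 := by
    intro k hk hk' z hz hz0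
    have hzn : z ≠ P n := by rwa [hP.close]
    refine good1 z ?_ ?_
    · intro j hj hzj
      obtain ⟨hA, hB⟩ := hP.simple k j hk' (by omega) (by omega) z hz hzj
      rcases hA with hA | hA <;> rcases hB with hB | hB
      · exact hP.ne (i := k) (j := j) (by omega) (by omega) (by omega) (hA.symm.trans hB)
      · exact hP.ne (i := k) (j := j + 1) (by omega) (by omega) (by omega) (hA.symm.trans hB)
      · by_cases hkn : k + 1 = n
        · rw [hkn] at hA; exact hzn hA
        · exact hP.ne (i := k + 1) (j := j) (by omega) (by omega) (by omega) (hA.symm.trans hB)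
      · by_cases hkn : k + 1 = n
        · rw [hkn] at hA; exact hzn hA
        · exact hP.ne (i := k + 1) (j := j + 1) (by omega) (by omega) (by omega) (hA.symm.trans hB)
    · intro hz'
      obtain ⟨hA, hB⟩ := h1 k hk' z hz' hz
      rcases hA with hA | hA
      · exact hz0 hA
      · rcases hB with hB | hB
        · exact hP.ne (i := c) (j := k) (by omega) (by omega) (by omega) (hA.symm.trans hB)
        · exact hP.ne (i := c) (j := k + 1) (by omega) (by omega) (by omega) (hA.symm.trans hB)
  have ga2 : ∀ k, k < b → ∀ z ∈ segment ℝ (P k) (P (k + 1)), z ≠ P 0 →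
      ContinuousAt S2 z ∧ S2 z ^ 2 = 1 := by
    intro k hk z hz hz0
    have hzn : z ≠ P n := by rwa [hP.close]
    refine good2 z ?_ ?_
    · intro j hj hj' hzj
      obtain ⟨hA, hB⟩ := hP.simple k j (by omega) (by omega) (by omega) z hz hzj
      have hB' : ∃ j', c ≤ j' ∧ j' < n ∧ z = P j' := by
        rcases hB with hB | hB
        · exact ⟨j, hj, hj', hB⟩
        · by_cases hjn : j + 1 = n
          · rw [hjn] at hB; exact absurd hB hzn
          · exact ⟨j + 1, by omega, by omega, hB⟩
      obtain ⟨j', a1, a2, a3⟩ := hB'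
      rcases hA with hA | hA
      · exact hP.ne (i := k) (j := j') (by omega) (by omega) (by omega) (hA.symm.trans a3)
      · exact hP.ne (i := k + 1) (j := j') (by omega) (by omega) (by omega) (hA.symm.trans a3)
    · intro hz'
      obtain ⟨hA, hB⟩ := h1 k (by omega) z hz' hz
      rcases hA with hA | hA
      · exact hz0 hA
      · rcases hB with hB | hB
        · exact hP.ne (i := c) (j := k) (by omega) (by omega) (by omega) (hA.symm.trans hB)
        · exact hP.ne (i := c) (j := k + 1) (by omega) (by omega) (by omega) (hA.symm.trans hB)
  have nbd : P b ≠ P d := hP.ne (by omega) (by omega) (by omega)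
  have n0c : P 0 ≠ P c := hP.ne (by omega) (by omega) (by omega)
  have n01 : P 0 ≠ P 1 := hP.ne (by omega) (by omega) (by omega)
  have n0n : P 0 ≠ P (n - 1) := hP.ne (by omega) (by omega) (by omega)
  -- the midpoint of d2
  set x2 : ℂ := P b + ((1 / 2 : ℝ) : ℂ) * (P d - P b) with hx2
  have hx2m : x2 ∈ segment ℝ (P b) (P d) := pt_mem (by norm_num) (by norm_num)
  have hx2b : x2 ≠ P b := pt_ne_left nbd (by norm_num)
  have hx2d : x2 ≠ P d := pt_ne_right nbd (by norm_num)
  have e1 : S1 x2 = S1 (P d) := by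
    have := const_line (S := S1) (a := P b) (b := P d) (I := Set.Ioc 0 1) Set.ordConnected_Ioc
      (fun t ht => gd1 _ (pt_mem ht.1.le ht.2) (pt_ne_left nbd ht.1))
      (s := 1 / 2) (t := 1) (by norm_num) (by norm_num)
    rw [hx2, this]; simp
  have e2 : S2 x2 = S2 (P b) := by
    have := const_line (S := S2) (a := P b) (b := P d) (I := Set.Ico 0 1) Set.ordConnected_Ico
      (fun t ht => gd2 _ (pt_mem ht.1 ht.2.le) (pt_ne_right nbd ht.2))
      (s := 1 / 2) (t := 0) (by norm_num) (by norm_num)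
    rw [hx2, this]; simp
  have f1 : ∀ k, d ≤ k → k ≤ n - 1 → S1 (P d) = S1 (P k) := by
    intro k hk
    induction k, hk using Nat.le_induction with
    | base => intro _; rfl
    | succ k hk ih =>
      intro hk'
      rw [ih (by omega)]
      refine const_on (T := segment ℝ (P k) (P (k + 1))) (convex_segment _ _).isPreconnected ?_ ?_
        (left_mem_segment ℝ _ _) (right_mem_segment ℝ _ _)
      all_goals
        intro z hz
        have hz0 : z ≠ P 0 := by
          rintro rfl
          obtain ⟨hA, hB⟩ := hP.simple k 0 (by omega) (by omega) (by omega) _ hz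
            (left_mem_segment ℝ _ _)
          rcases hA with hA | hA
          · exact hP.ne (i := 0) (j := k) (by omega) (by omega) (by omega) hA
          · exact hP.ne (i := 0) (j := k + 1) (by omega) (by omega) (by omega) hA
        have := ga1 k hk (by omega) z hz hz0
      · exact this.1
      · exact this.2
  have f2 : ∀ k, 1 ≤ k → k ≤ b → S2 (P 1) = S2 (P k) := by
    intro k hk
    induction k, hk using Nat.le_induction with
    | base => intro _; rfl
    | succ k hk ih =>
      intro hk'
      rw [ih (by omega)]
      refine const_on (T := segment ℝ (P k) (P (k + 1))) (convex_segment _ _).isPreconnected ?_ ?_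
        (left_mem_segment ℝ _ _) (right_mem_segment ℝ _ _)
      all_goals
        intro z hz
        have hz0 : z ≠ P 0 := by
          rintro rfl
          obtain ⟨hA, hB⟩ := hP.simple k 0 (by omega) (by omega) (by omega) _ hz
            (left_mem_segment ℝ _ _)
          rcases hA with hA | hA
          · exact hP.ne (i := 0) (j := k) (by omega) (by omega) (by omega) hA
          · exact hP.ne (i := 0) (j := k + 1) (by omega) (by omega) (by omega) hA
        have := ga2 k (by omega) z hz hz0
      · exact this.1
      · exact this.2
  have g1 : ∀ t : ℝ, 0 < t → t < 1 → S1 (P 0 + t * (P (n - 1) - P 0)) = S1 x2 := by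
    intro t ht0 ht1
    rw [e1, f1 (n - 1) (by omega) le_rfl]
    have := const_line (S := S1) (a := P 0) (b := P (n - 1)) (I := Set.Ioc 0 1)
      Set.ordConnected_Ioc (fun t ht => ga1 (n - 1) (by omega) (by omega) _
        (by rw [hn1, hP.close, segment_symm]; exact pt_mem ht.1.le ht.2) (pt_ne_left n0n ht.1))
      (s := t) (t := 1) ⟨ht0, ht1.le⟩ (by norm_num)
    rw [this]; simp
  have g2 : ∀ t : ℝ, 0 < t → t < 1 → S2 (P 0 + t * (P 1 - P 0)) = S2 x2 := by
    intro t ht0 ht1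
    rw [e2, ← f2 b (by omega) le_rfl]
    have := const_line (S := S2) (a := P 0) (b := P 1) (I := Set.Ioc 0 1)
      Set.ordConnected_Ioc (fun t ht => ga2 0 (by omega) _
        (pt_mem ht.1.le ht.2) (pt_ne_left n01 ht.1))
      (s := t) (t := 1) ⟨ht0, ht1.le⟩ (by norm_num)
    rw [this]; simp
  -- the whole polygon along d1
  have d1E : ∀ t : ℝ, 0 < t → t < 1 → P 0 + t * (P c - P 0) ∉ frontier K := by
    intro t ht0 ht1 h
    obtain ⟨k, hk, hz⟩ := (hfr _).1 h
    rcases (h1 k hk _ (pt_mem ht0.le ht1.le) hz).1 with h | h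
    · exact pt_ne_left n0c ht0 h
    · exact pt_ne_right n0c ht1 h
  have d2E : x2 ∉ frontier K := by
    intro h
    obtain ⟨k, hk, hz⟩ := (hfr _).1 h
    rcases (h2 k hk _ hx2m hz).1 with h | h
    · exact hx2b h
    · exact hx2d h
  have g3 : ∀ t : ℝ, 0 < t → t < 1 → arc P 0 n (P 0 + t * (P c - P 0)) = arc P 0 n x2 :=
    fun t ht0 ht1 => side_eq hP hK hfr (hK1 (pt_mem ht0.le ht1.le)) (hK2 hx2m) (d1E t ht0 ht1) d2E
  -- product
  have hprod : S1 x2 * S2 x2 = arc P 0 n x2 := by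
    have := rr_swap (a := P 0) (b := P c) (x := x2) (fun h => hX _ h hx2m)
    simp only [S1, S2]
    rw [arc_split (P := P) (Nat.zero_le c) (show c ≤ n by omega)]
    linear_combination (arc P 0 c x2 * arc P c n x2) * this
  -- directions
  have p0 : ∀ k, 1 ≤ k → k < n - 1 → P 0 ∉ segment ℝ (P k) (P (k + 1)) := by
    intro k hk hk' hz
    obtain ⟨hA, hB⟩ := hP.simple k 0 (by omega) (by omega) (by omega) _ hz
      (left_mem_segment ℝ _ _)
    rcases hA with hA | hA
    · exact hP.ne (i := 0) (j := k) (by omega) (by omega) (by omega) hA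
    · exact hP.ne (i := 0) (j := k + 1) (by omega) (by omega) (by omega) hA
  have a1 : P 1 ∉ segment ℝ (P 0) (P c) := by
    intro h
    rcases (h1 0 (by omega) _ h (right_mem_segment ℝ _ _)).1 with h | h
    · exact n01 h.symm
    · exact hP.ne (i := 1) (j := c) (by omega) (by omega) (by omega) h
  have a2 : P c ∉ segment ℝ (P 0) (P 1) := by
    intro h
    rcases (h1 0 (by omega) _ (right_mem_segment ℝ _ _) h).2 with h | h
    · exact n0c h.symm
    · exact hP.ne (i := c) (j := 1) (by omega) (by omega) (by omega) h
  have en : segment ℝ (P (n - 1)) (P (n - 1 + 1)) = segment ℝ (P 0) (P (n - 1)) := by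
    rw [hn1, hP.close, segment_symm]
  have a3 : P (n - 1) ∉ segment ℝ (P 0) (P c) := by
    intro h
    rcases (h1 (n - 1) (by omega) _ h (left_mem_segment ℝ _ _)).1 with h | h
    · exact n0n h.symm
    · exact hP.ne (i := n - 1) (j := c) (by omega) (by omega) (by omega) h
  have a4 : P c ∉ segment ℝ (P 0) (P (n - 1)) := by
    intro h
    rw [← en] at h
    rcases (h1 (n - 1) (by omega) _ (right_mem_segment ℝ _ _) h).2 with h | h
    · exact hP.ne (i := c) (j := n - 1) (by omega) (by omega) (by omega) h
    · exact hP.ne (i := c) (j := n - 1 + 1) (by omega) (by omega) (by omega) h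
  have a5 : P 1 ∉ segment ℝ (P 0) (P (n - 1)) := by
    intro h
    rw [← en] at h
    rcases (hP.simple (n - 1) 0 (by omega) (by omega) (by omega) _ h
      (right_mem_segment ℝ _ _)).1 with h | h
    · exact hP.ne (i := 1) (j := n - 1) (by omega) (by omega) (by omega) h
    · exact hP.ne (i := 1) (j := n - 1 + 1) (by omega) (by omega) (by omega) h
  have a6 : P (n - 1) ∉ segment ℝ (P 0) (P 1) := by
    intro h
    rcases (hP.simple 0 (n - 1) (by omega) (by omega) (by omega) _ h
      (left_mem_segment ℝ _ _)).1 with h | h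
    · exact n0n h.symm
    · exact hP.ne (i := n - 1) (j := 1) (by omega) (by omega) (by omega) h
  have s1 := slit_dir n01.symm n0c.symm a1 a2
  have s1' := slit_dir n0c.symm n01.symm a2 a1
  have s2 := slit_dir n0c.symm n0n.symm a4 a3
  have s2' := slit_dir n0n.symm n0c.symm a3 a4
  have s3 := slit_dir n01.symm n0n.symm a5 a6
  have r0 : ∀ x, arc P 0 c x = rr (P 0) (P 1) x * arc P 1 c x := fun x => by
    rw [arc_split (P := P) (show 0 ≤ 1 by omega) (show 1 ≤ c by omega), arc_one]
  have rn : ∀ x, arc P c n x = arc P c (n - 1) x * rr (P (n - 1)) (P 0) x := fun x => by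
    rw [arc_split (P := P) (show c ≤ n - 1 by omega) (show n - 1 ≤ n by omega)]
    congr 1
    have := arc_one P (n - 1) x
    rw [hn1, hP.close] at this
    exact this
  have cR1 : ContinuousAt (arc P 1 c) (P 0) := arc_cont fun k hk hk' => p0 k hk (by omega)
  have cR2 : ContinuousAt (arc P c (n - 1)) (P 0) := arc_cont fun k hk hk' => p0 k (by omega) hk'
  have k1 := corner' (σ := S1 x2) cR1 n01.symm n0c.symm n0n.symm s3 s2' (by
    intro t ht0 ht1
    rw [← g1 t ht0 ht1]; simp only [S1, r0])
  have k2 := corner' (σ := S2 x2) cR2 n0c.symm n0n.symm n01.symm s1' s3 (by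
    intro t ht0 ht1
    rw [← g2 t ht0 ht1]; simp only [S2, rn, mul_assoc])
  have k3 := corner' (σ := arc P 0 n x2) (R := fun x => arc P 1 c x * arc P c (n - 1) x)
    (cR1.mul cR2) n01.symm n0n.symm n0c.symm s1 s2 (by
    intro t ht0 ht1
    rw [← g3 t ht0 ht1, arc_split (P := P) (Nat.zero_le c) (show c ≤ n by omega), r0, rn]
    ring)
  have key := key_identity (sub_ne_zero.2 n01.symm) (sub_ne_zero.2 n0n.symm)
    (sub_ne_zero.2 n0c.symm) s1 s2
  rw [← hprod, k1, k2] at k3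
  have m1 := arc_ne P 1 c (P 0)
  have m2 := arc_ne P c (n - 1) (P 0)
  have m3 := mul_ne_zero (sq_ne (-(P 1 - P 0) / (P c - P 0))) (sq_ne (-(P c - P 0) / (P (n - 1) - P 0)))
  have : (arc P 1 c (P 0) * arc P c (n - 1) (P 0)) *
    (sq (-(P 1 - P 0) / (P c - P 0)) * sq (-(P c - P 0) / (P (n - 1) - P 0))) = 0 := by
    linear_combination (-1 / 2) * k3 + (1 / 2) * (arc P 1 c (P 0) * arc P c (n - 1) (P 0)) * key
  exact mul_ne_zero (mul_ne_zero m1 m2) m3 this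

/-- cyclic index -/
def ix (n : ℕ) [NeZero n] (t : ℕ) : Fin n := ⟨t % n, Nat.mod_lt _ (NeZero.pos n)⟩

lemma ix_succ (n : ℕ) [NeZero n] (t : ℕ) : ix n t + 1 = ix n (t + 1) := by
  apply Fin.ext
  simp [ix, Fin.val_add]

lemma ix_val (n : ℕ) [NeZero n] (i : Fin n) : ix n i.val = i :=
  Fin.ext (Nat.mod_eq_of_lt i.isLt)

lemma ix_add_n (n : ℕ) [NeZero n] (t : ℕ) : ix n (t + n) = ix n t := by
  apply Fin.ext; simp [ix]

lemma ix_inj {n : ℕ} [NeZero n] {i a b : ℕ} (ha : a < n) (hb : b < n)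
    (h : ix n (i + a) = ix n (i + b)) : a = b := by
  have h1 : (i + a) % n = (i + b) % n := congrArg Fin.val h
  have h2 : a % n = b % n := Nat.ModEq.add_left_cancel' i h1
  rwa [Nat.mod_eq_of_lt ha, Nat.mod_eq_of_lt hb] at h2

lemma ix_surj {n : ℕ} [NeZero n] (i j : Fin n) : ∃ a < n, ix n (i.val + a) = j := by
  refine ⟨(j.val + n - i.val) % n, Nat.mod_lt _ (NeZero.pos n), ?_⟩
  apply Fin.ext
  have hi := i.isLt
  have hj := j.isLt
  simp only [ix, Nat.add_mod_mod]
  rw [show i.val + (j.val + n - i.val) = j.val + n by omega, Nat.add_mod_right,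
    Nat.mod_eq_of_lt hj]

lemma step_exists {Q : ℕ → Prop} {a b : ℕ} (hab : a ≤ b) (ha : Q a) (hb : ¬ Q b) :
    ∃ t, a ≤ t ∧ t < b ∧ Q t ∧ ¬ Q (t + 1) := by
  induction b, hab using Nat.le_induction with
  | base => exact absurd ha hb
  | succ b hab ih =>
    by_cases hq : Q b
    · exact ⟨b, hab, by omega, hq, hb⟩
    · obtain ⟨t, h1, h2, h3⟩ := ih hq
      exact ⟨t, h1, by omega, h3⟩

/-- identification of the plane with ℂ -/
noncomputable def toC : Pt ≃L[ℝ] ℂ := Complex.equivRealProdCLM.symm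

lemma mem_seg (a b z : Pt) : toC z ∈ segment ℝ (toC a) (toC b) ↔ z ∈ seg a b := by
  have h := image_segment ℝ (toC.toLinearEquiv.toLinearMap.toAffineMap) a b
  have h' : toC '' segment ℝ a b = segment ℝ (toC a) (toC b) := h
  rw [← h', toC.injective.mem_set_image]
  rfl

theorem no_adj (n m : ℕ) [NeZero n] [NeZero m] (hm : 3 ≤ m)
    (p : Fin n → Pt) (hP : IsSimplePolygon p)
    (K : Set Pt) (hK : IsRegionOf p K)
    (f : Fin m → Fin n) (hf : IsCycleEmbedding p K f) (k l : Fin m) (hkl : f l = f k + 1) :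
    False := by
  obtain ⟨h3, hinj, hsimp⟩ := hP
  obtain ⟨-, hKcl, hKfr⟩ := hK
  obtain ⟨finj, fadj, fK, fNC, fE⟩ := hf
  set i := f k with hi
  set P : ℕ → ℂ := fun t => toC (p (ix n (i.val + t))) with hPdef
  have edge : ∀ e z, toC z ∈ segment ℝ (P e) (P (e + 1)) ↔ z ∈ edgeSeg p (ix n (i.val + e)) := by
    intro e z
    simp only [hPdef]
    rw [mem_seg, edgeSeg, ix_succ, add_assoc]
  have two : ∀ (e : ℕ) (z : Pt), (z = p (ix n (i.val + e)) ∨ z = p (ix n (i.val + e) + 1)) →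
      (toC z = P e ∨ toC z = P (e + 1)) := by
    rintro e z (h | h)
    · left; rw [h]
    · right; rw [h, ix_succ, add_assoc]
  have hPoly : Poly P n := by
    refine ⟨h3, ?_, ?_, ?_⟩
    · simp only [hPdef, ix_add_n, add_zero]
    · intro a b ha hb h
      exact ix_inj ha hb (hinj (toC.injective h))
    · intro a b ha hb hab z hza hzb
      obtain ⟨w, rfl⟩ := toC.surjective z
      rw [edge] at hza hzb
      have := hsimp _ _ (fun h => hab (ix_inj ha hb h)) ⟨hza, hzb⟩
      exact ⟨two a w (by simpa using this.1), two b w (by simpa using this.2)⟩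
  have hK' : closure (interior (toC '' K)) = toC '' K := by
    have e1 : toC '' interior K = interior (toC '' K) := toC.toHomeomorph.image_interior K
    have e2 : toC '' closure (interior K) = closure (toC '' interior K) :=
      toC.toHomeomorph.image_closure _
    rw [← e1, ← e2, hKcl]
  have hfr' : ∀ z, z ∈ frontier (toC '' K) ↔ ∃ e < n, z ∈ segment ℝ (P e) (P (e + 1)) := by
    intro z
    obtain ⟨w, rfl⟩ := toC.surjective z
    have e1 : toC '' frontier K = frontier (toC '' K) := toC.toHomeomorph.image_frontier K
    rw [← e1, toC.injective.mem_set_image, hKfr, Set.mem_iUnion]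
    constructor
    · rintro ⟨j, hj⟩
      obtain ⟨e, he, rfl⟩ := ix_surj i j
      exact ⟨e, he, (edge e w).2 hj⟩
    · rintro ⟨e, he, h⟩
      exact ⟨_, (edge e w).1 h⟩
  -- positions of the cycle nodes
  choose pos hpos hpos' using ix_surj i
  have pos_ix : ∀ e < n, pos (ix n (i.val + e)) = e := fun e he => ix_inj (hpos _) he (hpos' _)
  set g : ℕ → ℕ := fun t => pos (f (ix m (k.val + t))) with hg
  have gP : ∀ t, P (g t) = toC (p (f (ix m (k.val + t)))) := by
    intro t; simp only [hPdef, hg, hpos']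
  have gP' : ∀ t, P (g (t + 1)) = toC (p (f (ix m (k.val + t) + 1))) := by
    intro t; rw [gP, ix_succ, add_assoc]
  have gn : ∀ t, g t < n := fun t => hpos _
  have g0 : g 0 = 0 := by
    have := pos_ix 0 (by omega)
    simp only [add_zero, ix_val] at this
    simp only [hg, add_zero, ix_val, ← hi, this]
  have gm : g m = 0 := by
    rw [← g0]; simp only [hg, ix_add_n, add_zero]
  have ginj : ∀ s t, s < m → t < m → g s = g t → s = t := by
    intro s t hs ht h
    have : f (ix m (k.val + s)) = f (ix m (k.val + t)) := by
      rw [← hpos' (f (ix m (k.val + s))), ← hpos' (f (ix m (k.val + t)))]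
      simp only [hg] at h
      rw [h]
    exact ix_inj hs ht (finj this)
  have segt : ∀ t z, toC z ∈ segment ℝ (P (g t)) (P (g (t + 1))) ↔
      z ∈ seg (p (f (ix m (k.val + t)))) (p (f (ix m (k.val + t) + 1))) := by
    intro t z; rw [gP, gP', mem_seg]
  have cE : ∀ t, ∀ e < n, ∀ z ∈ segment ℝ (P (g t)) (P (g (t + 1))),
      z ∈ segment ℝ (P e) (P (e + 1)) →
      (z = P (g t) ∨ z = P (g (t + 1))) ∧ (z = P e ∨ z = P (e + 1)) := by
    intro t e he z hz hze
    obtain ⟨w, rfl⟩ := toC.surjective z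
    rw [segt] at hz
    rw [edge] at hze
    have := fE _ _ ⟨hz, hze⟩
    refine ⟨?_, two e w (by simpa using this.2)⟩
    rcases this.1 with h | h
    · left; rw [gP, h]
    · right; rw [gP']; exact congrArg toC h
  have cK : ∀ t, segment ℝ (P (g t)) (P (g (t + 1))) ⊆ toC '' K := by
    intro t z hz
    obtain ⟨w, rfl⟩ := toC.surjective z
    rw [segt] at hz
    exact ⟨w, fK _ hz, rfl⟩
  have cC : ∀ s t, g s ≠ g t → g s ≠ g (t + 1) → g (s + 1) ≠ g t → g (s + 1) ≠ g (t + 1) →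
      ∀ z ∈ segment ℝ (P (g s)) (P (g (s + 1))), z ∉ segment ℝ (P (g t)) (P (g (t + 1))) := by
    intro s t h1 h2 h3 h4 z hz hz'
    obtain ⟨w, rfl⟩ := toC.surjective z
    have q : ∀ a b, g a ≠ g b → P (g a) ≠ P (g b) := fun a b h e =>
      h (hPoly.inj _ _ (gn a) (gn b) e)
    have q1 := q _ _ h1
    have q2 := q _ _ h2
    have q3 := q _ _ h3
    have q4 := q _ _ h4
    rw [segt] at hz hz'
    have := fNC (ix m (k.val + s)) (ix m (k.val + t)) (by
      intro h
      have hmem : p (f (ix m (k.val + s))) ∈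
          ({p (f (ix m (k.val + t))), p (f (ix m (k.val + t) + 1))} : Set Pt) := by
        rw [← h]; simp
      rcases hmem with h | h
      · exact q1 (by rw [gP, gP, h])
      · exact q2 (by rw [gP, gP']; exact congrArg toC h)) ⟨hz, hz'⟩
    obtain ⟨hA, hB⟩ := this
    have hA' : toC w = P (g s) ∨ toC w = P (g (s + 1)) := by
      rcases hA with h | h
      · left; rw [gP, h]
      · right; rw [gP']; exact congrArg toC h
    have hB' : toC w = P (g t) ∨ toC w = P (g (t + 1)) := by
      rcases hB with h | h
      · left; rw [gP, h]
      · right; rw [gP']; exact congrArg toC h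
    rcases hA' with h | h <;> rcases hB' with h' | h'
    · exact q1 (h.symm.trans h')
    · exact q2 (h.symm.trans h')
    · exact q3 (h.symm.trans h')
    · exact q4 (h.symm.trans h')
  -- the node l
  obtain ⟨t0, ht0m, ht0⟩ := ix_surj k l
  have gt0 : g t0 = 1 := by
    have := pos_ix 1 (by omega)
    simp only [hg, ht0, hkl]
    rw [← this]
    congr 1
    rw [← ix_succ, ix_val]
  have t0ne0 : t0 ≠ 0 := by
    rintro rfl; rw [g0] at gt0; omega
  have t0ne1 : t0 ≠ 1 := by
    rintro rfl
    apply fadj k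
    left
    rw [← hi, ← hkl, ← ht0, ← ix_succ, ix_val]
  have t0nem : t0 ≠ m - 1 := by
    rintro rfl
    apply fadj l
    right
    have : l + 1 = k := by
      rw [← ht0, ix_succ, add_assoc, show m - 1 + 1 = m by omega, ix_add_n, ix_val]
    rw [this, ← hi, hkl]
  have hm1 : m - 1 + 1 = m := by omega
  have gne : ∀ s t, s < m → t < m → s ≠ t → g s ≠ g t := fun s t hs ht h e => h (ginj s t hs ht e)
  have gpos : ∀ t, 0 < t → t < m → 0 < g t := by
    intro t h1 h2
    have := gne t 0 h2 (by omega) (by omega)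
    omega
  have n1 := gne 1 t0 (by omega) ht0m (by omega)
  have n2 := gne (m - 1) t0 (by omega) ht0m (by omega)
  have n3 := gne (m - 1) 1 (by omega) (by omega) (by omega)
  have p1 := gpos 1 (by omega) (by omega)
  have p2 := gpos (m - 1) (by omega) (by omega)
  rcases lt_or_gt_of_ne n3 with hlt | hlt
  · -- c = g (m-1)
    obtain ⟨t, ha, hb, hq1, hq2⟩ := step_exists (Q := fun t => g (m - 1) < g t) (a := 1) (b := t0)
      (by omega) hlt (by omega)
    have hq3 := gne (t + 1) (m - 1) (by omega) (by omega) (by omega)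
    have hq4 := gpos (t + 1) (by omega) (by omega)
    have E1 := cE (m - 1)
    have K1 := cK (m - 1)
    have X := cC (m - 1) t
    rw [hm1, gm, segment_symm] at E1 K1 X
    refine no_interleave hPoly hK' hfr' (b := g (t + 1)) (c := g (m - 1)) (d := g t) hq4
      (by omega) hq1 (gn t) ?_ ?_ ?_ K1 ?_
    · intro e he z hz hze
      exact ⟨(E1 e he z hz hze).1.symm, (E1 e he z hz hze).2⟩
    · intro e he z hz hze
      rw [segment_symm] at hz
      exact ⟨(cE t e he z hz hze).1.symm, (cE t e he z hz hze).2⟩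
    · intro z hz
      rw [segment_symm ℝ (P (g (t + 1)))]
      exact X (by omega) (by omega) (by omega) (by omega) z hz
    · rw [segment_symm]; exact cK t
  · obtain ⟨t, ha, hb, hq1, hq2⟩ := step_exists (Q := fun t => g t < g 1) (a := t0) (b := m - 1)
      (by omega) (by omega) (by omega)
    have hq3 := gne (t + 1) 1 (by omega) (by omega) (by omega)
    have hq4 := gpos t (by omega) (by omega)
    have E1 := cE 0
    have K1 := cK 0
    have X := cC 0 t
    rw [zero_add, g0] at E1 K1 X
    exact no_interleave hPoly hK' hfr' (b := g t) (c := g 1) (d := g (t + 1)) hq4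
      hq1 (by omega) (gn _) E1 (cE t) (X (by omega) (by omega) (by omega) (by omega)) K1 (cK t)

end PolyEmb

/-- If a cycle graph on `m ≥ 3` nodes is planarly polygon-embedded into a simple polygon with
`n` vertices, then `m ≤ ⌊n / 2⌋`. -/
theorem stmt_2 (n m : ℕ) [NeZero n] [NeZero m] (hm : 3 ≤ m)
    (p : Fin n → Pt) (hP : IsSimplePolygon p)
    (K : Set Pt) (hK : IsRegionOf p K)
    (f : Fin m → Fin n) (hf : IsCycleEmbedding p K f) :
    m ≤ n / 2 := by
  have hno := PolyEmb.no_adj n m hm p hP K hK f hf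
  have hinj : Function.Injective (Sum.elim f (fun k => f k + 1)) := by
    apply Function.Injective.sumElim hf.1
    · intro a b h
      exact hf.1 (add_right_cancel h)
    · intro a b h
      exact hno b a h
  have := Fintype.card_le_of_injective _ hinj
  simp only [Fintype.card_sum, Fintype.card_fin] at this
  omega
end
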